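/- arXiv:1403.3464 — 4 statements merged into one kernel-verified Lean document; each statement's English description precedes it below -/
import Mathlib

section
/- Let 0 < c < 1 and ε > 0, and let k be a positive integer satisfying exp(ε²(k−1)/2) > k. If H is a finite graph on ℓ ≥ k vertices with minimum degree δ(H) ≥ c·ℓ, then there exists a subset S of the vertices of H with |S| = k such that the induced subgraph H[S] has minimum degree at least (c − ε)(k − 1). -/
open Finset in
lemma tl_choose_pow (b N : ℕ) (h : b ≤ N) (j : ℕ) :
    b.choose j * N ^ j ≤ N.choose j * b ^ j := by
  induction j with
  | zero => simp
  | succ j ih =>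
    have h1 := Nat.choose_succ_right_eq b j
    have h2 := Nat.choose_succ_right_eq N j
    have h3 : (b - j) * N ≤ (N - j) * b := by
      rw [Nat.sub_mul, Nat.sub_mul, Nat.mul_comm b N]
      exact Nat.sub_le_sub_left (Nat.mul_le_mul_left j h) _
    have h4 := Nat.mul_le_mul ih h3
    refine le_of_mul_le_mul_right (a := j + 1) ?_ (Nat.succ_pos j)
    calc b.choose (j+1) * N ^ (j+1) * (j+1) = (b.choose (j+1) * (j+1)) * N ^ (j+1) := by ring
      _ = b.choose j * N ^ j * ((b - j) * N) := by rw [h1]; ring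
      _ ≤ _ := h4
      _ = (N.choose (j+1) * (j+1)) * b ^ (j+1) := by rw [h2]; ring
      _ = _ := by ring

open Finset in
lemma tl_count {V : Type*} [DecidableEq V] (U A : Finset V) (hA : A ⊆ U) (m : ℕ) :
    ((U.powersetCard m).filter (fun T => A ⊆ T)).card * U.card.choose A.card
      ≤ U.card.choose m * m.choose A.card := by
  by_cases hm : A.card ≤ m
  · by_cases hmU : m ≤ U.card
    · rw [Nat.choose_mul hm]
      rw [mul_comm]
      refine Nat.mul_le_mul_left _ ?_
      rw [← card_sdiff_of_subset hA, ← card_powersetCard]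
      refine card_le_card_of_injOn (fun T => T \ A) ?_ ?_
      · intro T hT
        simp only [coe_filter, mem_powersetCard, Set.mem_ofPred_eq] at hT
        simp only [mem_coe, mem_powersetCard]
        exact ⟨sdiff_subset_sdiff hT.1.1 le_rfl, by rw [card_sdiff_of_subset hT.2, hT.1.2]⟩
      · intro T hT T' hT' h
        simp only [coe_filter, mem_powersetCard, Set.mem_ofPred_eq] at hT hT'
        simp only at h
        rw [← sdiff_union_of_subset hT.2, h, sdiff_union_of_subset hT'.2]
    · rw [powersetCard_eq_empty.2 (by omega)]; simp
  · rw [filter_eq_empty_iff.2]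
    · simp
    · intro T hT h
      have := card_le_card h
      rw [(mem_powersetCard.1 hT).2] at this
      exact hm this

open Finset in
lemma tl_sum_pow {V : Type*} [DecidableEq V] (U B : Finset V) (hB : B ⊆ U) (hU : 0 < U.card)
    (m : ℕ) (y : ℝ) (hy : 0 ≤ y) :
    ∑ T ∈ U.powersetCard m, (1 + y) ^ (T ∩ B).card
      ≤ U.card.choose m * (1 + y * (B.card / U.card)) ^ m := by
  have hN : (0:ℝ) < U.card := by exact_mod_cast hU
  set g : ℕ → ℝ := fun j => U.card.choose m * (m.choose j * (y * (B.card / U.card)) ^ j) with hg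
  have hg0 : ∀ j, 0 ≤ g j := fun j => by positivity
  have e1 : ∑ T ∈ U.powersetCard m, (1 + y) ^ (T ∩ B).card
      = ∑ A ∈ B.powerset, ∑ T ∈ (U.powersetCard m).filter (fun T => A ⊆ T), y ^ A.card := by
    rw [← sum_comm' (s := U.powersetCard m) (t := fun T => (T ∩ B).powerset)]
    · refine sum_congr rfl fun T _ => ?_
      rw [add_comm, ← sum_pow_mul_eq_add_pow]
      simp
    · intro T A
      simp only [mem_powerset, mem_filter, subset_inter_iff]
      tauto
  have e2 : ∀ A ∈ B.powerset,
      ∑ T ∈ (U.powersetCard m).filter (fun T => A ⊆ T), y ^ A.card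
        ≤ (fun j : ℕ => (U.card.choose m * m.choose j / U.card.choose j : ℝ) * y ^ j) A.card := by
    intro A hA
    have hAU := (mem_powerset.1 hA).trans hB
    rw [sum_const, nsmul_eq_mul]
    refine mul_le_mul_of_nonneg_right ?_ (by positivity)
    have hp : (0:ℝ) < U.card.choose A.card := by
      exact_mod_cast Nat.choose_pos (card_le_card hAU)
    rw [le_div_iff₀ hp]
    exact_mod_cast tl_count U A hAU m
  have hbN := card_le_card hB
  calc _ ≤ _ := e1.le
    _ ≤ _ := sum_le_sum e2
    _ ≤ ∑ j ∈ range (B.card + 1), g j := by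
      rw [sum_powerset_apply_card (fun j : ℕ => (U.card.choose m * m.choose j / U.card.choose j : ℝ) * y ^ j)]
      refine sum_le_sum fun j hj => ?_
      have hj' : j ≤ B.card := by simpa [Nat.lt_succ_iff] using hj
      have hp : (0:ℝ) < U.card.choose j := by
        exact_mod_cast Nat.choose_pos (hj'.trans hbN)
      have hq : (B.card.choose j : ℝ) / U.card.choose j ≤ (B.card / U.card : ℝ) ^ j := by
        rw [div_pow, div_le_div_iff₀ hp (by positivity)]
        have := tl_choose_pow _ _ hbN j
        rw [mul_comm ((B.card : ℝ) ^ j)]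
        exact_mod_cast this
      have : (0:ℝ) ≤ U.card.choose m * m.choose j * y ^ j := by positivity
      have := mul_le_mul_of_nonneg_left hq this
      rw [nsmul_eq_mul, hg]
      simp only
      rw [mul_pow]
      calc _ = (U.card.choose m * m.choose j * y ^ j : ℝ) * (B.card.choose j / U.card.choose j) := by
            ring
        _ ≤ _ := this
        _ = _ := by ring
    _ ≤ ∑ j ∈ range (B.card + m + 1), g j :=
      sum_le_sum_of_subset_of_nonneg (range_subset_range.2 (by omega)) fun j _ _ => hg0 j
    _ = ∑ j ∈ range (m + 1), g j := by
      symm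
      refine sum_subset (range_subset_range.2 (by omega)) fun j _ hj => ?_
      have : m < j := by simpa using hj
      simp [hg, Nat.choose_eq_zero_of_lt this]
    _ = _ := by
      rw [hg, ← mul_sum, add_comm (1:ℝ), add_pow]
      congr 1
      refine sum_congr rfl fun j _ => ?_
      simp [mul_comm]

lemma tl_hoeff (q t : ℝ) (h0 : 0 ≤ q) (h1 : q ≤ 1) :
    1 + (Real.exp t - 1) * q ≤ Real.exp (t * q + t ^ 2 / 2) := by
  have key : ∀ y : ℝ, -1 ≤ y → y ≤ 1 →
      Real.exp (t * y) ≤ (1 + y) / 2 * Real.exp t + (1 - y) / 2 * Real.exp (-t) := by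
    intro y hy1 hy2
    have hp : 0 ≤ (1 + y) / 2 := by linarith
    have hn : 0 ≤ (1 - y) / 2 := by linarith
    have := convexOn_exp.2 (Set.mem_univ t) (Set.mem_univ (-t)) hp hn (by ring)
    simp only [smul_eq_mul] at this
    refine le_trans (le_of_eq ?_) this
    congr 1
    ring
  have k1 := mul_le_mul_of_nonneg_left (key (-q) (by linarith) (by linarith)) (sub_nonneg.2 h1)
  have k2 := mul_le_mul_of_nonneg_left (key (1 - q) (by linarith) (by linarith)) h0
  have hc := Real.cosh_le_exp_half_sq t
  rw [Real.cosh_eq] at hc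
  have hs : (1 - q) * Real.exp (t * -q) + q * Real.exp (t * (1 - q)) ≤ Real.exp (t ^ 2 / 2) := by
    linarith
  have hm := mul_le_mul_of_nonneg_left hs (Real.exp_pos (t * q)).le
  rw [← Real.exp_add] at hm
  refine le_trans (le_of_eq ?_) hm
  have a1 : Real.exp (t * q) * Real.exp (t * -q) = 1 := by
    rw [← Real.exp_add]; simp
  have a2 : Real.exp (t * q) * Real.exp (t * (1 - q)) = Real.exp t := by
    rw [← Real.exp_add]; congr 1; ring
  linear_combination (-(1 - q)) * a1 - q * a2

open Finset in
lemma tl_tail {V : Type*} [DecidableEq V] (U D : Finset V) (hD : D ⊆ U) (hU : 0 < U.card)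
    (m : ℕ) (c ε : ℝ) (hc0 : 0 < c) (hc1 : c < 1) (hε : 0 < ε)
    (hd : c * U.card ≤ D.card) :
    (((U.powersetCard m).filter (fun T => ((T ∩ D).card : ℝ) < (c - ε) * m)).card : ℝ)
      ≤ U.card.choose m * Real.exp (-(ε ^ 2 * m / 2)) := by
  have hN : (0:ℝ) < U.card := by exact_mod_cast hU
  have h1 := tl_sum_pow U (U \ D) sdiff_subset hU m (Real.exp ε - 1)
    (by linarith [Real.add_one_le_exp ε])
  have hE : 0 ≤ Real.exp ε - 1 := by linarith [Real.add_one_le_exp ε]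
  have hq : ((U \ D).card : ℝ) / U.card ≤ 1 - c := by
    rw [div_le_iff₀ hN, card_sdiff_of_subset hD, Nat.cast_sub (card_le_card hD)]
    linarith
  have h2 : (1 + (Real.exp ε - 1) * (((U \ D).card : ℝ) / U.card)) ^ m
      ≤ Real.exp (m * (ε * (1 - c) + ε ^ 2 / 2)) := by
    rw [Real.exp_nat_mul]
    refine pow_le_pow_left₀ (by positivity) ?_ m
    refine le_trans ?_ (tl_hoeff (1 - c) ε (by linarith) (by linarith))
    have := mul_le_mul_of_nonneg_left hq hE
    linarith
  have h3 : (((U.powersetCard m).filter (fun T => ((T ∩ D).card : ℝ) < (c - ε) * m)).card : ℝ)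
      * Real.exp (m * (ε * (1 - c + ε)))
      ≤ ∑ T ∈ U.powersetCard m, (1 + (Real.exp ε - 1)) ^ (T ∩ (U \ D)).card := by
    rw [← nsmul_eq_mul, ← sum_const]
    refine le_trans (sum_le_sum fun T hT => ?_)
      (sum_le_sum_of_subset_of_nonneg (filter_subset _ _) fun T _ _ => by positivity)
    rw [mem_filter, mem_powersetCard] at hT
    obtain ⟨⟨hTU, hTm⟩, hT⟩ := hT
    have e : (T ∩ D).card + (T ∩ (U \ D)).card = m := by
      rw [← hTm, ← card_inter_add_card_sdiff T D]
      congr 2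
      ext x
      simp only [mem_inter, mem_sdiff]
      exact ⟨fun h => ⟨h.1, h.2.2⟩, fun h => ⟨h.1, hTU h.1, h.2⟩⟩
    have e' : ((T ∩ D).card : ℝ) + (T ∩ (U \ D)).card = m := by exact_mod_cast e
    rw [add_sub_cancel, ← Real.exp_nat_mul]
    refine Real.exp_le_exp.2 ?_
    have : (m : ℝ) * (1 - c + ε) ≤ (T ∩ (U \ D)).card := by linarith
    nlinarith
  have h4 := (h3.trans h1).trans (mul_le_mul_of_nonneg_left h2 (Nat.cast_nonneg _))
  rw [← le_div_iff₀ (Real.exp_pos _), mul_div_assoc, ← Real.exp_sub] at h4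
  refine h4.trans (le_of_eq ?_)
  congr 2
  ring

open Finset in
theorem thinning_lemma {V : Type*} [Fintype V] [DecidableEq V]
    (H : SimpleGraph V) [DecidableRel H.Adj]
    (c ε : ℝ) (hc0 : 0 < c) (hc1 : c < 1) (hε : 0 < ε) (k : ℕ) (hk : 0 < k)
    (hkexp : (k : ℝ) < Real.exp (ε ^ 2 * ((k : ℝ) - 1) / 2))
    (hℓ : k ≤ Fintype.card V)
    (hδ : ∀ v : V, c * (Fintype.card V : ℝ) ≤ (H.degree v : ℝ)) :
    ∃ S : Finset V, S.card = k ∧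
      ∀ v ∈ S, (c - ε) * ((k : ℝ) - 1) ≤ ((S.filter (H.Adj v)).card : ℝ) := by
  obtain ⟨m, rfl⟩ : ∃ m, k = m + 1 := ⟨k - 1, by omega⟩
  have hm : 0 < m := by
    rcases Nat.eq_zero_or_pos m with rfl | h
    · simp at hkexp
    · exact h
  push_cast at hkexp ⊢
  rw [add_sub_cancel_right] at hkexp ⊢
  by_contra! hcon
  obtain ⟨N, hN⟩ : ∃ N, Fintype.card V = N + 1 := ⟨Fintype.card V - 1, by omega⟩
  have hUc : ∀ v : V, (univ.erase v).card = N := fun v => by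
    rw [card_erase_of_mem (mem_univ v), card_univ, hN]; rfl
  have hsub : ∀ v, H.neighborFinset v ⊆ univ.erase v := fun v x hx => by
    simp only [SimpleGraph.mem_neighborFinset] at hx
    simp [hx.ne']
  set bad : V → Finset (Finset V) := fun v => ((univ.erase v).powersetCard m).filter
    (fun T => ((T ∩ H.neighborFinset v).card : ℝ) < (c - ε) * m) with hbad
  have hb : ∀ v, ((bad v).card : ℝ) ≤ N.choose m * Real.exp (-(ε ^ 2 * m / 2)) := by
    intro v
    have := tl_tail (univ.erase v) (H.neighborFinset v) (hsub v) (by rw [hUc]; omega) m c ε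
      hc0 hc1 hε (by
        rw [hUc, SimpleGraph.card_neighborFinset_eq_degree]
        refine le_trans ?_ (hδ v)
        rw [hN]; push_cast; linarith)
    rwa [hUc] at this
  have hcov : (univ : Finset V).powersetCard (m+1) ⊆
      univ.biUnion (fun v => (bad v).image (insert v)) := by
    intro S hS
    have hSc := (mem_powersetCard.1 hS).2
    obtain ⟨v, hv, hlt⟩ := hcon S hSc
    rw [mem_biUnion]
    refine ⟨v, mem_univ v, mem_image.2 ⟨S.erase v, ?_, insert_erase hv⟩⟩
    rw [hbad]
    simp only [mem_filter, mem_powersetCard]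
    refine ⟨⟨erase_subset_erase _ (subset_univ S), by rw [card_erase_of_mem hv, hSc]; rfl⟩, ?_⟩
    refine lt_of_eq_of_lt ?_ hlt
    congr 2
    ext x
    simp only [mem_inter, mem_erase, SimpleGraph.mem_neighborFinset, mem_filter]
    exact ⟨fun h => ⟨h.1.2, h.2⟩, fun h => ⟨⟨h.2.ne', h.1⟩, h.2⟩⟩
  have hle : (N+1).choose (m+1) ≤ ∑ v, (bad v).card := by
    have := (card_le_card hcov).trans card_biUnion_le
    rw [card_powersetCard, card_univ, hN] at this
    exact this.trans (sum_le_sum fun v _ => card_image_le)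
  have hle' : ((N+1).choose (m+1) : ℝ) ≤ (N + 1) * (N.choose m * Real.exp (-(ε ^ 2 * m / 2))) := by
    calc ((N+1).choose (m+1) : ℝ) ≤ ∑ v, ((bad v).card : ℝ) := by exact_mod_cast hle
      _ ≤ ∑ v : V, (N.choose m * Real.exp (-(ε ^ 2 * m / 2)) : ℝ) := sum_le_sum fun v _ => hb v
      _ = _ := by rw [sum_const, card_univ, hN, nsmul_eq_mul]; push_cast; ring
  have hch : ((N:ℝ) + 1) * N.choose m = (N+1).choose (m+1) * (m+1) := by
    exact_mod_cast Nat.add_one_mul_choose_eq N m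
  have hpos : (0:ℝ) < (N+1).choose (m+1) := by
    exact_mod_cast Nat.choose_pos (by omega)
  rw [← mul_assoc, hch, mul_assoc] at hle'
  have h1 : ((m:ℝ) + 1) * Real.exp (-(ε ^ 2 * m / 2)) < 1 := by
    rw [Real.exp_neg, ← div_eq_mul_inv, div_lt_one (Real.exp_pos _)]
    exact hkexp
  nlinarith
end

section
/- There is a constant C > 0 such that for every nondecreasing nonnegative function ν and all sufficiently large k, there exists a graph G on at least C·k^{ν(k)²+1} vertices such that every induced subgraph H of G or of its complement on ℓ ≥ k vertices has minimum degree less than (1/2)(ℓ−1) + ν(ℓ)·√((ℓ−1)·ln ℓ). -/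
open scoped Classical

namespace QuasiRamsey

/-- sign of a Boolean -/
noncomputable def sgn (b : Bool) : ℝ := if b = true then 1 else -1

/-- the pairs of `S` in increasing order -/
noncomputable def prs {N : ℕ} (S : Finset (Fin N)) : Finset (Fin N × Fin N) :=
  S.offDiag.filter (fun p => p.1 < p.2)

lemma sum_offDiag {N : ℕ} (S : Finset (Fin N)) (f : Fin N → Fin N → ℝ)
    (hf : ∀ a b, f a b = f b a) :
    ∑ p ∈ S.offDiag, f p.1 p.2 = 2 * ∑ p ∈ prs S, f p.1 p.2 := by
  have h1 := Finset.sum_filter_add_sum_filter_not S.offDiag (fun p => p.1 < p.2)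
    (fun p => f p.1 p.2)
  have h2 : ∑ p ∈ S.offDiag.filter (fun p => ¬ p.1 < p.2), f p.1 p.2
      = ∑ p ∈ prs S, f p.1 p.2 := by
    refine Finset.sum_bij' (fun p _ => p.swap) (fun p _ => p.swap) ?_ ?_ ?_ ?_ ?_
    · rintro ⟨a, b⟩ h
      simp only [prs, Finset.mem_filter, Finset.mem_offDiag, Prod.swap] at h ⊢
      exact ⟨⟨h.1.2.1, h.1.1, fun e => h.1.2.2 e.symm⟩,
        lt_of_le_of_ne (not_lt.1 h.2) (fun e => h.1.2.2 e.symm)⟩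
    · rintro ⟨a, b⟩ h
      simp only [prs, Finset.mem_filter, Finset.mem_offDiag, Prod.swap] at h ⊢
      exact ⟨⟨h.1.2.1, h.1.1, fun e => h.1.2.2 e.symm⟩, not_lt.2 h.2.le⟩
    · rintro ⟨a, b⟩ h; rfl
    · rintro ⟨a, b⟩ h; rfl
    · rintro ⟨a, b⟩ h; exact hf a b
  rw [← h1, h2]
  unfold prs
  ring

lemma card_prs {N : ℕ} (S : Finset (Fin N)) :
    2 * ((prs S).card : ℝ) = (S.card : ℝ) * ((S.card : ℝ) - 1) := by
  have h := sum_offDiag S (fun _ _ => 1) (fun _ _ => rfl)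
  simp only [Finset.sum_const, nsmul_eq_mul, mul_one] at h
  rw [← h, Finset.offDiag_card, Nat.cast_sub (Nat.le_mul_self _)]
  push_cast
  ring

lemma deg_sum {N : ℕ} (H : SimpleGraph (Fin N)) (S : Finset (Fin N)) (b : ℝ)
    (h : ∀ v ∈ S, ((S.card : ℝ) - 1) / 2 + b ≤ ((S.filter (H.Adj v)).card : ℝ)) :
    (S.card : ℝ) * b ≤ ∑ p ∈ prs S, (if H.Adj p.1 p.2 then (1 : ℝ) else -1) := by
  have h1 := sum_offDiag S (fun a b => if H.Adj a b then (1 : ℝ) else 0)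
    (fun a b => by simp only [H.adj_comm])
  have h2 : ∑ p ∈ S.offDiag, (if H.Adj p.1 p.2 then (1 : ℝ) else 0)
      = ∑ v ∈ S, ((S.filter (H.Adj v)).card : ℝ) := by
    have : ∑ p ∈ S.offDiag, (if H.Adj p.1 p.2 then (1 : ℝ) else 0)
        = ∑ p ∈ S ×ˢ S, (if H.Adj p.1 p.2 then (1 : ℝ) else 0) := by
      apply Finset.sum_subset
      · intro p hp
        simp only [Finset.mem_offDiag, Finset.mem_product] at hp ⊢
        exact ⟨hp.1, hp.2.1⟩
      · rintro ⟨a, b⟩ hp hn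
        simp only [Finset.mem_offDiag, Finset.mem_product] at hp hn
        have : a = b := by
          by_contra hne
          exact hn ⟨hp.1, hp.2, hne⟩
        subst this
        simp
    rw [this, Finset.sum_product]
    refine Finset.sum_congr rfl fun v _ => ?_
    simp
  have h3 : (S.card : ℝ) * (((S.card : ℝ) - 1) / 2 + b)
      ≤ ∑ v ∈ S, ((S.filter (H.Adj v)).card : ℝ) := by
    have := Finset.card_nsmul_le_sum S _ _ h
    rwa [nsmul_eq_mul] at this
  have h4 : ∑ p ∈ prs S, (if H.Adj p.1 p.2 then (1 : ℝ) else -1)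
      = 2 * ∑ p ∈ prs S, (if H.Adj p.1 p.2 then (1 : ℝ) else 0) - (prs S).card := by
    rw [Finset.mul_sum, Finset.card_eq_sum_ones, Nat.cast_sum, ← Finset.sum_sub_distrib]
    refine Finset.sum_congr rfl fun p _ => ?_
    split_ifs <;> norm_num
  have h5 := card_prs S
  rw [h4]
  linarith

/-- the graph of a Boolean labelling -/
def gr {N : ℕ} (ω : Fin N × Fin N → Bool) : SimpleGraph (Fin N) where
  Adj a b := (a < b ∧ ω (a, b) = true) ∨ (b < a ∧ ω (b, a) = true)
  symm := ⟨fun a b h => h.symm⟩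
  loopless := ⟨fun a h => by simp at h⟩

lemma gr_adj {N : ℕ} (ω : Fin N × Fin N → Bool) {a b : Fin N} (h : a < b) :
    (gr ω).Adj a b ↔ ω (a, b) = true := by
  simp [gr, h, h.le]

lemma mgf {α : Type*} [Fintype α] [DecidableEq α] (E : Finset α) (t : ℝ) :
    ∑ ω : α → Bool, Real.exp (t * ∑ e ∈ E, sgn (ω e))
      ≤ (Fintype.card (α → Bool) : ℝ) * Real.exp (E.card * (t ^ 2 / 2)) := by
  have h1 : ∀ ω : α → Bool, Real.exp (t * ∑ e ∈ E, sgn (ω e))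
      = ∏ e, (if e ∈ E then Real.exp (t * sgn (ω e)) else 1) := by
    intro ω
    rw [Finset.mul_sum, Real.exp_sum, Finset.prod_ite_mem, Finset.univ_inter]
  simp_rw [h1]
  rw [← Fintype.prod_sum (fun (e : α) (b : Bool) => if e ∈ E then Real.exp (t * sgn b) else 1)]
  have h2 : ∀ e : α, ∑ b : Bool, (if e ∈ E then Real.exp (t * sgn b) else 1)
      = 2 * (if e ∈ E then Real.cosh t else 1) := by
    intro e
    split_ifs
    · simp [sgn, Real.cosh_eq]; ring
    · simp
  simp_rw [h2]
  rw [Finset.prod_mul_distrib, Finset.prod_ite_mem, Finset.univ_inter, Finset.prod_const,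
    Finset.prod_const]
  have h3 : (Fintype.card (α → Bool) : ℝ) = 2 ^ (Finset.univ : Finset α).card := by
    simp
  rw [h3]
  have h4 : Real.cosh t ^ E.card ≤ Real.exp (E.card * (t ^ 2 / 2)) := by
    rw [Real.exp_nat_mul]
    exact pow_le_pow_left₀ (Real.cosh_pos t).le (Real.cosh_le_exp_half_sq t) _
  gcongr

lemma chernoff {α : Type*} [Fintype α] [DecidableEq α] (E : Finset α) (hE : 0 < E.card) (a ε : ℝ)
    (hε : ε ^ 2 = 1) :
    ((Finset.univ.filter (fun ω : α → Bool => a ≤ ε * ∑ e ∈ E, sgn (ω e))).card : ℝ)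
      * Real.exp (a ^ 2 / (2 * E.card)) ≤ (Fintype.card (α → Bool) : ℝ) ∨ a < 0 := by
  by_cases ha : a < 0
  · exact Or.inr ha
  left
  push Not at ha
  have hM : (0 : ℝ) < E.card := by exact_mod_cast hE
  set M : ℝ := (E.card : ℝ) with hMdef
  have h1 := mgf E (a / M * ε)
  have h2 : ((Finset.univ.filter (fun ω : α → Bool => a ≤ ε * ∑ e ∈ E, sgn (ω e))).card : ℝ)
      * Real.exp (a / M * a) ≤ ∑ ω : α → Bool, Real.exp (a / M * ε * ∑ e ∈ E, sgn (ω e)) := by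
    rw [← nsmul_eq_mul]
    refine (Finset.card_nsmul_le_sum _ (fun ω => Real.exp (a / M * ε * ∑ e ∈ E, sgn (ω e))) _
      ?_).trans ?_
    · intro ω hω
      simp only [Finset.mem_filter, Finset.mem_univ, true_and] at hω
      rw [Real.exp_le_exp, mul_assoc]
      exact mul_le_mul_of_nonneg_left hω (by positivity)
    · exact Finset.sum_le_sum_of_subset_of_nonneg (Finset.filter_subset _ _)
        (fun _ _ _ => (Real.exp_pos _).le)
  have h3 := h2.trans h1
  have e1 : a / M * a = a ^ 2 / (2 * M) + M * ((a / M * ε) ^ 2 / 2) := by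
    rw [mul_pow, hε]; field_simp; ring
  rw [e1, Real.exp_add, ← mul_assoc] at h3
  exact le_of_mul_le_mul_right h3 (Real.exp_pos _)

/-- threshold excess -/
noncomputable def thr (ν : ℕ → ℝ) (l : ℕ) : ℝ :=
  ν l * Real.sqrt (((l : ℝ) - 1) * Real.log (l : ℝ))

/-- bad labellings for `S` and sign `ε` -/
noncomputable def bad {N : ℕ} (ν : ℕ → ℝ) (S : Finset (Fin N)) (ε : ℝ) :
    Finset (Fin N × Fin N → Bool) :=
  Finset.univ.filter (fun ω => (S.card : ℝ) * thr ν S.card ≤ ε * ∑ e ∈ prs S, sgn (ω e))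

lemma card_bad {N : ℕ} (ν : ℕ → ℝ) (hν : ∀ l, 0 ≤ ν l) (S : Finset (Fin N)) (hS : 2 ≤ S.card)
    (ε : ℝ) (hε : ε ^ 2 = 1) :
    ((bad ν S ε).card : ℝ) ≤ (Fintype.card (Fin N × Fin N → Bool) : ℝ) *
      (((S.card : ℝ) ^ (ν S.card ^ 2))⁻¹) ^ S.card := by
  have hl : (2 : ℝ) ≤ S.card := by exact_mod_cast hS
  have hc := card_prs S
  have hE : 0 < (prs S).card := by
    have : (0 : ℝ) < (prs S).card := by nlinarith
    exact_mod_cast this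
  have hlog : 0 ≤ Real.log (S.card : ℝ) := Real.log_nonneg (by linarith)
  have hthr : 0 ≤ thr ν S.card := mul_nonneg (hν _) (Real.sqrt_nonneg _)
  rcases chernoff (prs S) hE ((S.card : ℝ) * thr ν S.card) ε hε with h | h
  · have e1 : ((S.card : ℝ) * thr ν S.card) ^ 2 / (2 * (prs S).card)
        = (S.card : ℝ) * (Real.log S.card * ν S.card ^ 2) := by
      rw [hc, thr, mul_pow, mul_pow, Real.sq_sqrt (mul_nonneg (by linarith) hlog)]
      have : (S.card : ℝ) - 1 ≠ 0 := by linarith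
      field_simp
    rw [e1, Real.exp_nat_mul, ← Real.rpow_def_of_pos (by linarith)] at h
    rw [inv_pow, ← div_eq_mul_inv, le_div_iff₀ (by positivity)]
    unfold bad
    exact h
  · exact absurd h (not_lt.2 (by positivity))

lemma choose_bound (N l : ℕ) (hl : 1 ≤ l) :
    (N.choose l : ℝ) ≤ (3 * N / l : ℝ) ^ l := by
  have hlp : (0 : ℝ) < l := by exact_mod_cast hl
  have h1 : (N.choose l : ℝ) ≤ (N : ℝ) ^ l / (l.factorial : ℝ) := Nat.choose_le_pow_div l N
  have h2 : (l : ℝ) ^ l / (l.factorial : ℝ) ≤ 3 ^ l := by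
    refine (Real.pow_div_factorial_le_exp (l : ℝ) hlp.le l).trans ?_
    have : Real.exp (l : ℝ) = Real.exp 1 ^ l := by rw [← Real.exp_nat_mul, mul_one]
    rw [this]
    exact pow_le_pow_left₀ (Real.exp_pos 1).le (by linarith [Real.exp_one_lt_d9]) _
  refine h1.trans ?_
  rw [div_pow, mul_pow, le_div_iff₀ (by positivity)]
  calc (N : ℝ) ^ l / (l.factorial : ℝ) * (l : ℝ) ^ l
      = ((l : ℝ) ^ l / (l.factorial : ℝ)) * (N : ℝ) ^ l := by ring
    _ ≤ 3 ^ l * (N : ℝ) ^ l := by gcongr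

lemma geom (n : ℕ) : ∑ i ∈ Finset.range n, (1 / 4 : ℝ) ^ i ≤ 4 / 3 := by
  have : ∑ i ∈ Finset.range n, (1 / 4 : ℝ) ^ i = (1 - (1 / 4 : ℝ) ^ n) * (4 / 3) := by
    induction n with
    | zero => simp
    | succ n ih => rw [Finset.sum_range_succ, ih]; ring
  rw [this]
  have : (0 : ℝ) < (1 / 4 : ℝ) ^ n := by positivity
  linarith

end QuasiRamsey

open QuasiRamsey in
theorem quasi_ramsey_random_lower_bound :
    ∃ C : ℝ, 0 < C ∧ ∀ ν : ℕ → ℝ, Monotone ν → (∀ ℓ, 0 ≤ ν ℓ) →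
      ∀ᶠ k : ℕ in Filter.atTop, ∃ N : ℕ, ∃ G : SimpleGraph (Fin N),
        C * (k : ℝ) ^ (ν k ^ 2 + 1) ≤ (N : ℝ) ∧
        ∀ S : Finset (Fin N), k ≤ S.card →
          (∃ v ∈ S, ((S.filter (G.Adj v)).card : ℝ) <
              ((S.card : ℝ) - 1) / 2 +
                ν S.card * Real.sqrt (((S.card : ℝ) - 1) * Real.log (S.card : ℝ))) ∧
          (∃ v ∈ S, ((S.filter (Gᶜ.Adj v)).card : ℝ) <
              ((S.card : ℝ) - 1) / 2 +
                ν S.card * Real.sqrt (((S.card : ℝ) - 1) * Real.log (S.card : ℝ))) := by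
  refine ⟨1 / 24, by norm_num, fun ν hmono hν => ?_⟩
  filter_upwards [Filter.eventually_ge_atTop 24] with k hk
  have hk' : (24 : ℝ) ≤ k := by exact_mod_cast hk
  set X : ℝ := (k : ℝ) ^ (ν k ^ 2 + 1) with hX
  have hXk : (k : ℝ) ≤ X := by
    calc (k : ℝ) = (k : ℝ) ^ (1 : ℝ) := (Real.rpow_one _).symm
      _ ≤ X := Real.rpow_le_rpow_of_exponent_le (by linarith) (by nlinarith [sq_nonneg (ν k)])
  set N : ℕ := ⌈(1 / 24 : ℝ) * X⌉₊ with hN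
  have hN1 : (1 / 24 : ℝ) * X ≤ N := Nat.le_ceil _
  have hN2 : (N : ℝ) ≤ X / 12 := by
    have := (Nat.ceil_lt_add_one (a := (1 / 24 : ℝ) * X) (by linarith)).le
    rw [← hN] at this
    linarith
  set T : ℝ := (Fintype.card (Fin N × Fin N → Bool) : ℝ) with hT
  have hTpos : 0 < T := by
    rw [hT]; exact_mod_cast Fintype.card_pos
  -- the function of the size that bounds the number of bad labellings
  set g : ℕ → ℝ := fun l => if k ≤ l then T * (((l : ℝ) ^ (ν l ^ 2))⁻¹) ^ l else 0 with hg
  set F : Finset (Finset (Fin N)) := Finset.univ.filter (fun S => k ≤ S.card) with hF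
  set B : Finset (Fin N × Fin N → Bool) := F.biUnion (fun S => bad ν S 1 ∪ bad ν S (-1)) with hB
  have hterm : ∀ l, (N.choose (l + 1) : ℝ) * g (l + 1) ≤ T * ((1 / 4) * (1 / 4) ^ l) := by
    intro l
    simp only [hg]
    split_ifs with h
    · have hl : (k : ℝ) ≤ ((l + 1 : ℕ) : ℝ) := by exact_mod_cast h
      have hm : 1 ≤ l + 1 := by omega
      rw [← pow_succ']
      generalize l + 1 = m at *
      have hm0 : (0 : ℝ) < m := by linarith
      have hY : X ≤ (m : ℝ) ^ (ν m ^ 2) * m := by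
        calc X ≤ (m : ℝ) ^ (ν k ^ 2 + 1) :=
              Real.rpow_le_rpow (by linarith) hl (by positivity)
          _ ≤ (m : ℝ) ^ (ν m ^ 2 + 1) := by
              refine Real.rpow_le_rpow_of_exponent_le (by linarith) ?_
              have := pow_le_pow_left₀ (hν k) (hmono h) 2
              linarith
          _ = (m : ℝ) ^ (ν m ^ 2) * m := Real.rpow_add_one hm0.ne' _
      have hZ : 0 < (m : ℝ) ^ (ν m ^ 2) := Real.rpow_pos_of_pos hm0 _
      generalize (m : ℝ) ^ (ν m ^ 2) = Z at *
      have hq : (3 * N / m : ℝ) * Z⁻¹ ≤ 1 / 4 := by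
        rw [← div_eq_mul_inv, div_div, div_le_iff₀ (by positivity)]
        linarith
      calc (N.choose m : ℝ) * (T * Z⁻¹ ^ m)
          ≤ (3 * N / m : ℝ) ^ m * (T * Z⁻¹ ^ m) := by
            gcongr
            exact choose_bound N m hm
        _ = T * ((3 * N / m : ℝ) * Z⁻¹) ^ m := by rw [mul_pow]; ring
        _ ≤ T * (1 / 4) ^ m := by gcongr
    · simp; positivity
  have hsum : ∑ S ∈ F, T * (((S.card : ℝ) ^ (ν S.card ^ 2))⁻¹) ^ S.card ≤ T * (1 / 3) := by
    have e1 : ∑ S ∈ F, T * (((S.card : ℝ) ^ (ν S.card ^ 2))⁻¹) ^ S.card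
        = ∑ S ∈ (Finset.univ : Finset (Fin N)).powerset, g S.card := by
      rw [hF, Finset.sum_filter, Finset.powerset_univ]
    rw [e1, Finset.sum_powerset_apply_card, Finset.card_univ, Fintype.card_fin,
      Finset.sum_range_succ']
    have h0 : g 0 = 0 := by
      simp only [hg]; rw [if_neg (by omega)]
    rw [h0]
    simp only [nsmul_eq_mul, mul_zero, add_zero]
    refine (Finset.sum_le_sum fun l _ => hterm l).trans ?_
    rw [← Finset.mul_sum, ← Finset.mul_sum]
    have := geom N
    gcongr
    linarith
  have hBcard : (B.card : ℝ) < T := by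
    have h1 : (B.card : ℝ) ≤ ∑ S ∈ F, ((bad ν S 1 ∪ bad ν S (-1)).card : ℝ) := by
      have := Finset.card_biUnion_le (s := F) (t := fun S => bad ν S 1 ∪ bad ν S (-1))
      rw [← Nat.cast_sum]
      exact Nat.cast_le.2 this
    have h2 : ∀ S ∈ F, ((bad ν S 1 ∪ bad ν S (-1)).card : ℝ)
        ≤ 2 * (T * (((S.card : ℝ) ^ (ν S.card ^ 2))⁻¹) ^ S.card) := by
      intro S hS
      have hSk : k ≤ S.card := by simpa [hF] using hS
      have a1 := card_bad ν hν S (by omega) 1 (by norm_num)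
      have a2 := card_bad ν hν S (by omega) (-1) (by norm_num)
      have a3 : ((bad ν S 1 ∪ bad ν S (-1)).card : ℝ)
          ≤ (bad ν S 1).card + (bad ν S (-1)).card := by
        exact_mod_cast Finset.card_union_le _ _
      linarith
    have h3 := h1.trans (Finset.sum_le_sum h2)
    rw [← Finset.mul_sum] at h3
    linarith
  obtain ⟨ω, hω⟩ : ∃ ω, ω ∉ B := by
    by_contra hcon
    push Not at hcon
    have : B = Finset.univ := Finset.eq_univ_iff_forall.2 hcon
    rw [this, Finset.card_univ] at hBcard
    exact lt_irrefl _ hBcard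
  refine ⟨N, gr ω, hN1, fun S hS => ?_⟩
  have hgood : ω ∉ bad ν S 1 ∧ ω ∉ bad ν S (-1) := by
    constructor
    · intro h
      exact hω (Finset.mem_biUnion.2 ⟨S, by simpa [hF] using hS, Finset.mem_union_left _ h⟩)
    · intro h
      exact hω (Finset.mem_biUnion.2 ⟨S, by simpa [hF] using hS, Finset.mem_union_right _ h⟩)
  constructor
  · by_contra hcon
    push Not at hcon
    apply hgood.1
    have := deg_sum (gr ω) S (thr ν S.card) hcon
    simp only [bad, Finset.mem_filter, Finset.mem_univ, true_and, one_mul]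
    refine this.trans (le_of_eq (Finset.sum_congr rfl fun p hp => ?_))
    have hlt : p.1 < p.2 := by
      simp only [prs, Finset.mem_filter] at hp; exact hp.2
    simp only [gr_adj ω hlt, sgn]
  · by_contra hcon
    push Not at hcon
    apply hgood.2
    have := deg_sum (gr ω)ᶜ S (thr ν S.card) (fun v hv => by
      refine (hcon v hv).trans (le_of_eq ?_)
      congr!)
    simp only [bad, Finset.mem_filter, Finset.mem_univ, true_and]
    rw [Finset.mul_sum]
    refine this.trans (le_of_eq (Finset.sum_congr rfl fun p hp => ?_))
    have hlt : p.1 < p.2 := by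
      simp only [prs, Finset.mem_filter] at hp; exact hp.2
    simp only [SimpleGraph.compl_adj, gr_adj ω hlt, sgn]
    by_cases hb : ω (p.1, p.2) = true
    · simp [hb]
    · simp [hb, hlt.ne]
end

section
/- Fix ν ≥ 0 and c > 4/3. For all sufficiently large k, every graph G on at least k^{c·10⁶·ν² + 4/3} vertices satisfies: G or its complement contains an induced subgraph H on ℓ ≥ k vertices with minimum degree at least (1/2)(ℓ−1) + ν·√((ℓ−1)·ln ℓ). -/
open scoped Classical

namespace QR

def sg (b : Bool) : ℝ := if b then 1 else -1

def rs {n : ℕ} (τ : Fin n → ℝ) (s : Fin n → Bool) : ℝ := ∑ j, sg (s j) * τ j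

lemma sum_cons {n : ℕ} (F : (Fin (n+1) → Bool) → ℝ) :
    ∑ s, F s = ∑ s : Fin n → Bool, (F (Fin.cons true s) + F (Fin.cons false s)) := by
  rw [← (Fin.consEquiv (fun _ : Fin (n+1) => Bool)).sum_comp, Fintype.sum_prod_type]
  simp [Fin.consEquiv, Finset.sum_add_distrib]

lemma rs_cons {n : ℕ} (τ : Fin (n+1) → ℝ) (x : Bool) (s : Fin n → Bool) :
    rs τ (Fin.cons x s) = sg x * τ 0 + rs (fun j => τ j.succ) s := by
  simp [rs, Fin.sum_univ_succ]

lemma moment2 : ∀ (n : ℕ) (τ : Fin n → ℝ) (_ : ∀ j, τ j ^ 2 = 1),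
    ∑ s, rs τ s ^ 2 = 2 ^ n * n := by
  intro n
  induction n with
  | zero => intro τ _; simp [rs]
  | succ n ih =>
    intro τ h
    have := ih (fun j => τ j.succ) (fun j => h _)
    rw [sum_cons]
    have h0 := h 0
    have e : ∀ s : Fin n → Bool, rs τ (Fin.cons true s) ^ 2 + rs τ (Fin.cons false s) ^ 2
        = 2 * rs (fun j => τ j.succ) s ^ 2 + 2 := by
      intro s
      rw [rs_cons, rs_cons]
      simp only [sg]
      simp
      linear_combination 2 * h0
    simp only [e, Finset.sum_add_distrib, ← Finset.mul_sum, this]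
    simp
    ring

lemma moment4 : ∀ (n : ℕ) (τ : Fin n → ℝ) (_ : ∀ j, τ j ^ 2 = 1),
    ∑ s, rs τ s ^ 4 ≤ 2 ^ n * (3 * (n:ℝ) ^ 2) := by
  intro n
  induction n with
  | zero => intro τ _; simp [rs]
  | succ n ih =>
    intro τ h
    have := ih (fun j => τ j.succ) (fun j => h _)
    have h2 := moment2 n (fun j => τ j.succ) (fun j => h _)
    rw [sum_cons]
    have h0 := h 0
    have e : ∀ s : Fin n → Bool, rs τ (Fin.cons true s) ^ 4 + rs τ (Fin.cons false s) ^ 4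
        = 2 * rs (fun j => τ j.succ) s ^ 4 + 12 * rs (fun j => τ j.succ) s ^ 2 + 2 := by
      intro s
      rw [rs_cons, rs_cons]
      simp only [sg]
      simp
      linear_combination (2 * (τ 0)^2 + 2 + 12 * rs (fun j => τ j.succ) s ^ 2) * h0
    simp only [e, Finset.sum_add_distrib, ← Finset.mul_sum, h2]
    simp
    have : (0:ℝ) < 2 ^ n := by positivity
    rw [pow_succ]
    nlinarith

lemma rs_neg {n : ℕ} (τ : Fin n → ℝ) (s : Fin n → Bool) :
    rs τ (fun j => !(s j)) = - rs τ s := by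
  simp only [rs, ← Finset.sum_neg_distrib]
  refine Finset.sum_congr rfl fun j _ => ?_
  cases s j <;> simp [sg]

lemma block (n : ℕ) (hn : 0 < n) (τ : Fin n → ℝ) (h : ∀ j, τ j ^ 2 = 1) :
    (2:ℝ) ^ n / 7 ≤
      ((Finset.univ.filter (fun s : Fin n → Bool => Real.sqrt n / 4 ≤ rs τ s)).card : ℝ) := by
  have hnR : (0:ℝ) < n := by exact_mod_cast hn
  have h2 := moment2 n τ h
  have h4 := moment4 n τ h
  set C := ((Finset.univ.filter (fun s : Fin n → Bool => Real.sqrt n / 4 ≤ rs τ s)).card : ℝ)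
  have hC : C = ∑ s : Fin n → Bool, (if Real.sqrt n / 4 ≤ rs τ s then (1:ℝ) else 0) := by
    simp [C]
  have hC' : C = ∑ s : Fin n → Bool, (if Real.sqrt n / 4 ≤ - rs τ s then (1:ℝ) else 0) := by
    rw [hC]
    refine Fintype.sum_equiv (Equiv.arrowCongr (Equiv.refl _) Equiv.boolNot) _ _ ?_
    intro s
    have : (Equiv.arrowCongr (Equiv.refl (Fin n)) Equiv.boolNot) s = fun j => !(s j) := by
      ext j; simp [Equiv.arrowCongr]
    rw [this, rs_neg, neg_neg]
  have key : ∀ s : Fin n → Bool,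
      (13/20) * (rs τ s ^ 2 / n - 1/16) - (169/1600) * (rs τ s ^ 4 / n ^ 2 - rs τ s ^ 2 / n / 8 + 1/256)
      ≤ (if Real.sqrt n / 4 ≤ rs τ s then (1:ℝ) else 0)
        + (if Real.sqrt n / 4 ≤ - rs τ s then (1:ℝ) else 0) := by
    intro s
    set y := rs τ s ^ 2 / n with hy
    have hy2 : rs τ s ^ 4 / n ^ 2 = y ^ 2 := by rw [hy]; ring
    rw [hy2]
    by_cases hb : 1/16 ≤ y
    · have : (1:ℝ) ≤ (if Real.sqrt n / 4 ≤ rs τ s then (1:ℝ) else 0)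
        + (if Real.sqrt n / 4 ≤ - rs τ s then (1:ℝ) else 0) := by
        have habs : Real.sqrt n / 4 ≤ |rs τ s| := by
          apply (pow_le_pow_iff_left₀ (by positivity) (abs_nonneg _) two_ne_zero).1
          rw [sq_abs, div_pow, Real.sq_sqrt hnR.le]
          rw [hy, le_div_iff₀ hnR] at hb
          linarith
        rcases le_abs.1 habs with h | h
        · rw [if_pos h]; split_ifs <;> norm_num
        · rw [if_pos h]; split_ifs <;> norm_num
      refine le_trans ?_ this
      nlinarith [sq_nonneg ((13/40) * (y - 1/16) - 1)]
    · have : (0:ℝ) ≤ (if Real.sqrt n / 4 ≤ rs τ s then (1:ℝ) else 0)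
        + (if Real.sqrt n / 4 ≤ - rs τ s then (1:ℝ) else 0) := by
        split_ifs <;> norm_num
      refine le_trans ?_ this
      push Not at hb
      nlinarith [sq_nonneg (y - 1/16)]
  have hs := Finset.sum_le_sum (fun s (_ : s ∈ (Finset.univ : Finset (Fin n → Bool))) => key s)
  rw [Finset.sum_add_distrib, ← hC, ← hC'] at hs
  simp only [Finset.sum_sub_distrib, Finset.sum_add_distrib, ← Finset.mul_sum, ← Finset.sum_div,
    h2] at hs
  have h4' : (∑ s, rs τ s ^ 4) / (n:ℝ) ^ 2 ≤ 2 ^ n * 3 := by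
    rw [div_le_iff₀ (by positivity)]; linarith
  have e1 : (2:ℝ) ^ n * n / n = 2 ^ n := by field_simp
  rw [e1] at hs
  simp at hs
  have : (0:ℝ) < 2 ^ n := by positivity
  nlinarith


/-- sum of weights over pairs in `A × B` -/
def E {V : Type*} (w : V → V → ℝ) (A B : Finset V) : ℝ := ∑ u ∈ A, ∑ v ∈ B, w u v

structure IsW {V : Type*} (w : V → V → ℝ) : Prop where
  symm : ∀ u v, w u v = w v u
  diag : ∀ u, w u u = 0
  off : ∀ u v, u ≠ v → w u v ^ 2 = 1

lemma IsW.neg {V : Type*} {w : V → V → ℝ} (h : IsW w) : IsW (fun u v => - w u v) :=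
  ⟨fun u v => by rw [h.symm], fun u => by simp [h.diag], fun u v huv => by
    simpa using h.off u v huv⟩

lemma E_neg {V : Type*} (w : V → V → ℝ) (A B : Finset V) :
    E (fun u v => - w u v) A B = - E w A B := by
  simp [E]

lemma E_comm {V : Type*} {w : V → V → ℝ} (h : IsW w) (A B : Finset V) : E w A B = E w B A := by
  unfold E
  rw [Finset.sum_comm]
  refine Finset.sum_congr rfl fun u _ => Finset.sum_congr rfl fun v _ => h.symm _ _

variable {V : Type*} [DecidableEq V] {w : V → V → ℝ}

lemma E_union_left {A B : Finset V} (hd : Disjoint A B) (C : Finset V) :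
    E w (A ∪ B) C = E w A C + E w B C := by
  simp [E, Finset.sum_union hd]

lemma E_union_right {A B : Finset V} (hd : Disjoint A B) (C : Finset V) :
    E w C (A ∪ B) = E w C A + E w C B := by
  simp [E, Finset.sum_union hd, Finset.sum_add_distrib]

lemma E_union (h : IsW w) {A B : Finset V} (hd : Disjoint A B) :
    E w (A ∪ B) (A ∪ B) = E w A A + E w B B + 2 * E w A B := by
  rw [E_union_left hd, E_union_right hd, E_union_right hd, E_comm h B A]; ring

lemma abs_le_one (h : IsW w) (u v : V) : |w u v| ≤ 1 := by
  by_cases huv : u = v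
  · subst huv; simp [h.diag]
  · rw [← sq_le_one_iff_abs_le_one, h.off u v huv]

lemma E_abs_le (h : IsW w) (A : Finset V) : |E w A A| ≤ (A.card : ℝ) ^ 2 := by
  calc |E w A A| ≤ ∑ u ∈ A, |∑ v ∈ A, w u v| := Finset.abs_sum_le_sum_abs _ _
    _ ≤ ∑ u ∈ A, ∑ v ∈ A, |w u v| := Finset.sum_le_sum fun u _ => Finset.abs_sum_le_sum_abs _ _
    _ ≤ ∑ u ∈ A, ∑ v ∈ A, (1:ℝ) :=
        Finset.sum_le_sum fun u _ => Finset.sum_le_sum fun v _ => abs_le_one h u v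
    _ = _ := by simp; ring

lemma E_erase (h : IsW w) {X : Finset V} {v : V} (hv : v ∈ X) :
    E w X X = E w (X.erase v) (X.erase v) + 2 * ∑ u ∈ X, w v u := by
  have hd : Disjoint {v} (X.erase v) := by simp
  have hu : {v} ∪ X.erase v = X := by
    ext x; by_cases hx : x = v <;> simp [hx, hv]
  have := E_union h hd
  rw [hu] at this
  rw [this]
  have h1 : E w {v} {v} = 0 := by simp [E, h.diag]
  have h2 : E w {v} (X.erase v) = ∑ u ∈ X, w v u := by
    simp only [E, Finset.sum_singleton]
    rw [← Finset.add_sum_erase X _ hv, h.diag, zero_add]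
  rw [h1, h2]; ring

/-- A weak form of the Erdős–Spencer theorem. -/
lemma erdos_spencer (h : IsW w) (U : Finset V) (q b : ℕ) (hb : 0 < b)
    (hU : q * b + q * b * 7 ^ q ≤ U.card) :
    ∃ S ⊆ U, S.card ≤ 2 * (q * b) ∧
      ((q * b : ℕ) : ℝ) * q * Real.sqrt b / 8 ≤ |E w S S| := by
  obtain ⟨W, hWU, hWc⟩ := Finset.exists_subset_card_eq (show q * b ≤ U.card by omega)
  have eqv : Nonempty (Fin q × Fin b ≃ W) := by
    refine ⟨Fintype.equivOfCardEq ?_⟩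
    simp [hWc]
  obtain ⟨e⟩ := eqv
  set good : (Fin q → Fin b → Bool) → V → Prop := fun s v =>
    ∀ i, Real.sqrt b / 4 ≤ rs (fun j => w v (e (i, j))) (s i) with hgood
  -- counting
  have hcount : ∀ v ∈ U \ W, ((2:ℝ) ^ b / 7) ^ q ≤
      ((Finset.univ.filter (fun s => good s v)).card : ℝ) := by
    intro v hv
    have : Finset.univ.filter (fun s => good s v) = Fintype.piFinset (fun i : Fin q =>
        Finset.univ.filter (fun s : Fin b → Bool =>
          Real.sqrt b / 4 ≤ rs (fun j => w v (e (i, j))) s)) := by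
      ext s; simp [hgood, Fintype.mem_piFinset]
    rw [this, Fintype.card_piFinset]
    push_cast
    have : ((2:ℝ) ^ b / 7) ^ q = ∏ i : Fin q, ((2:ℝ) ^ b / 7) := by
      rw [Finset.prod_const]; simp only [Finset.card_univ, Fintype.card_fin]
    rw [this]
    refine Finset.prod_le_prod (fun i _ => by positivity) fun i _ => ?_
    refine block b hb _ fun j => h.off _ _ ?_
    rintro rfl
    exact (Finset.mem_sdiff.1 hv).2 (e (i, j)).2
  have hex : ∃ s, q * b ≤ ((U \ W).filter (fun v => good s v)).card := by
    by_contra hcon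
    push Not at hcon
    have hdc : ∑ s : Fin q → Fin b → Bool, (((U \ W).filter (fun v => good s v)).card : ℝ)
        = ∑ v ∈ U \ W, ((Finset.univ.filter (fun s => good s v)).card : ℝ) := by
      simp only [Finset.card_filter]
      push_cast
      rw [Finset.sum_comm]
    have hlow : ((U \ W).card : ℝ) * ((2:ℝ) ^ b / 7) ^ q ≤
        ∑ v ∈ U \ W, ((Finset.univ.filter (fun s => good s v)).card : ℝ) := by
      rw [← nsmul_eq_mul, ← Finset.sum_const]
      exact Finset.sum_le_sum hcount
    have hup : ∑ s : Fin q → Fin b → Bool, (((U \ W).filter (fun v => good s v)).card : ℝ)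
        < ∑ s : Fin q → Fin b → Bool, ((q * b : ℕ) : ℝ) := by
      refine Finset.sum_lt_sum_of_nonempty ⟨fun _ _ => true, Finset.mem_univ _⟩ fun s _ => ?_
      exact_mod_cast hcon s
    rw [hdc] at hup
    have h3 := hlow.trans_lt hup
    have hcard : (q * b * 7 ^ q : ℕ) ≤ (U \ W).card := by
      rw [Finset.card_sdiff_of_subset hWU, hWc]; omega
    have hcard' : ((q * b : ℕ) : ℝ) * 7 ^ q ≤ ((U \ W).card : ℝ) := by exact_mod_cast hcard
    simp only [Finset.sum_const, Finset.card_univ, Fintype.card_pi, Finset.prod_const,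
      Fintype.card_fin, Fintype.card_bool, nsmul_eq_mul, div_pow] at h3
    have h7 : (0:ℝ) < 7 ^ q := by positivity
    have h2 : (0:ℝ) < (2 ^ b) ^ q := by positivity
    rw [mul_div_assoc', div_lt_iff₀ h7] at h3
    push_cast at h3 hcard'
    nlinarith
  obtain ⟨s, hs⟩ := hex
  obtain ⟨B, hBs, hBc⟩ := Finset.exists_subset_card_eq hs
  have hBU : B ⊆ U \ W := hBs.trans (Finset.filter_subset _ _)
  set emb : Fin q × Fin b ↪ V := ⟨fun p => (e p : V), fun p p' hp => by
    simpa using hp⟩ with hemb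
  set A := (Finset.univ.filter (fun p : Fin q × Fin b => s p.1 p.2 = true)).map emb with hA
  set A' := (Finset.univ.filter (fun p : Fin q × Fin b => ¬ s p.1 p.2 = true)).map emb with hA'
  have hAW : A ⊆ W := by
    intro x hx; simp only [hA, Finset.mem_map] at hx
    obtain ⟨p, _, rfl⟩ := hx; exact (e p).2
  have hAW' : A' ⊆ W := by
    intro x hx; simp only [hA', Finset.mem_map] at hx
    obtain ⟨p, _, rfl⟩ := hx; exact (e p).2
  have hdev : ∀ v ∈ B, (q:ℝ) * Real.sqrt b / 4 ≤ ∑ u ∈ A, w v u - ∑ u ∈ A', w v u := by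
    intro v hv
    have hg : good s v := (Finset.mem_filter.1 (hBs hv)).2
    have h1 : ∑ i : Fin q, Real.sqrt b / 4 ≤ ∑ i, rs (fun j => w v (e (i, j))) (s i) :=
      Finset.sum_le_sum fun i _ => hg i
    have h2 : ∑ i, rs (fun j => w v (e (i, j))) (s i) = ∑ u ∈ A, w v u - ∑ u ∈ A', w v u := by
      rw [hA, hA', Finset.sum_map, Finset.sum_map, Finset.sum_filter, Finset.sum_filter,
        ← Finset.sum_sub_distrib, Fintype.sum_prod_type]
      refine Finset.sum_congr rfl fun i _ => ?_
      unfold rs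
      refine Finset.sum_congr rfl fun j _ => ?_
      cases s i j <;> simp [sg] <;> rfl
    rw [← h2]
    refine le_trans (le_of_eq ?_) h1
    simp; ring
  have htot : ((q * b : ℕ) : ℝ) * ((q:ℝ) * Real.sqrt b / 4) ≤ E w B A - E w B A' := by
    unfold E
    rw [← Finset.sum_sub_distrib, ← hBc, ← nsmul_eq_mul, ← Finset.sum_const]
    exact Finset.sum_le_sum hdev
  have hBW : Disjoint B W := Finset.disjoint_of_subset_left hBU Finset.sdiff_disjoint
  have hBA := E_union h (Finset.disjoint_of_subset_right hAW hBW)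
  have hBA' := E_union h (Finset.disjoint_of_subset_right hAW' hBW)
  have hBU' : B ⊆ U := hBU.trans Finset.sdiff_subset
  have cA := Finset.card_le_card hAW
  have cA' := Finset.card_le_card hAW'
  by_contra hcon
  push Not at hcon
  have b1 := (abs_lt.1 (hcon A (hAW.trans hWU) (by omega)))
  have b2 := (abs_lt.1 (hcon A' (hAW'.trans hWU) (by omega)))
  have b3 := (abs_lt.1 (hcon (B ∪ A) (Finset.union_subset hBU' (hAW.trans hWU))
    ((Finset.card_union_le _ _).trans (by omega))))
  have b4 := (abs_lt.1 (hcon (B ∪ A') (Finset.union_subset hBU' (hAW'.trans hWU))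
    ((Finset.card_union_le _ _).trans (by omega))))
  linarith [b1.1, b1.2, b2.1, b2.2, b3.1, b3.2, b4.1, b4.2]

lemma greedy (h : IsW w) (U : Finset V) (k : ℕ) (d M : ℝ) (R : ℕ) (hd : 0 ≤ d)
    (hU : ∀ P ⊆ U, P.card ≤ R * k → ∃ S ⊆ U \ P, d ≤ E w S S)
    (hM : ∀ S, |E w S S| ≤ M)
    (hgood : ∀ X, (∀ v ∈ X, 0 ≤ ∑ u ∈ X, w v u) → X.card ≤ k) :
    ∀ r : ℕ, r ≤ R → ∃ P ⊆ U, P.card ≤ (r + 1) * k ∧ E w P P ≤ M - d * (r * (r - 1) / 2) ∧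
      ∀ Y ⊆ U \ P, 2 * E w P Y ≤ - (r + 1) * E w Y Y := by
  have hmax : ∀ P ⊆ U, P.card ≤ R * k → ∃ X ⊆ U \ P, X.card ≤ k ∧ d ≤ E w X X ∧
      ∀ Y ⊆ (U \ P) \ X, 2 * E w X Y ≤ - E w Y Y := by
    intro P hP hPc
    obtain ⟨X, hX, hXm⟩ := Finset.exists_max_image (U \ P).powerset (fun S => E w S S)
      ⟨∅, by simp⟩
    rw [Finset.mem_powerset] at hX
    obtain ⟨S, hS, hdS⟩ := hU P hP hPc
    refine ⟨X, hX, hgood X ?_, hdS.trans (hXm S (Finset.mem_powerset.2 hS)), ?_⟩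
    · intro v hv
      have := hXm (X.erase v) (Finset.mem_powerset.2 ((Finset.erase_subset _ _).trans hX))
      have h2 := E_erase h hv
      linarith
    · intro Y hY
      have := hXm (X ∪ Y) (Finset.mem_powerset.2
        (Finset.union_subset hX (hY.trans Finset.sdiff_subset)))
      have hdj : Disjoint X Y := (Finset.disjoint_of_subset_left hY Finset.sdiff_disjoint).symm
      have h2 := E_union h hdj
      linarith
  intro r
  induction r with
  | zero =>
    intro _
    obtain ⟨X, hX, hXk, _, hXY⟩ := hmax ∅ (by simp) (by simp)
    simp only [Finset.sdiff_empty] at hX hXY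
    refine ⟨X, hX, by simpa using hXk, ?_, ?_⟩
    · simpa using (abs_le.1 (hM X)).2
    · simpa using hXY
  | succ r ih =>
    intro hr
    obtain ⟨P, hP, hPc, hPE, hPY⟩ := ih (by omega)
    obtain ⟨X, hX, hXk, hXd, hXY⟩ := hmax P hP (hPc.trans (Nat.mul_le_mul_right _ hr))
    have hdj : Disjoint P X := (Finset.disjoint_of_subset_left hX Finset.sdiff_disjoint).symm
    refine ⟨P ∪ X, Finset.union_subset hP (hX.trans Finset.sdiff_subset), ?_, ?_, ?_⟩
    · refine (Finset.card_union_le _ _).trans ?_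
      have : (r + 1 + 1) * k = (r + 1) * k + k := by ring
      omega
    · rw [E_union h hdj]
      have h1 := hPY X hX
      push_cast
      have : d * r ≤ E w X X * r := mul_le_mul_of_nonneg_right hXd (Nat.cast_nonneg r)
      nlinarith
    · intro Y hY
      rw [E_union_left hdj]
      replace hY : Y ⊆ (U \ P) \ X := by
        intro y hy
        have := hY hy
        simp only [Finset.mem_sdiff, Finset.mem_union] at this ⊢
        tauto
      have h1 := hPY Y (hY.trans Finset.sdiff_subset)
      have h2 := hXY Y hY
      push_cast
      linarith

noncomputable def ff (n : ℕ) : ℝ := n * Real.sqrt (n * Real.log n)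

lemma ff_incr (x : ℕ) : Real.sqrt (x * Real.log (x + 1 : ℕ)) ≤ ff (x + 1) - ff x := by
  have h1 : Real.sqrt (x * Real.log x) ≤ Real.sqrt ((x + 1 : ℕ) * Real.log (x + 1 : ℕ)) := by
    apply Real.sqrt_le_sqrt
    rcases Nat.eq_zero_or_pos x with rfl | hx
    · simp
    · have hx' : (1:ℝ) ≤ x := by exact_mod_cast hx
      have := Real.log_nonneg hx'
      push_cast
      gcongr <;> linarith
  have h2 : Real.sqrt (x * Real.log (x + 1 : ℕ)) ≤
      Real.sqrt ((x + 1 : ℕ) * Real.log (x + 1 : ℕ)) := by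
    apply Real.sqrt_le_sqrt
    have := Real.log_natCast_nonneg (x + 1)
    gcongr
    simp
  unfold ff
  have hx0 : (0:ℝ) ≤ x := Nat.cast_nonneg x
  have := mul_le_mul_of_nonneg_left h1 hx0
  push_cast at *
  linarith

lemma ff_nonneg (n : ℕ) : 0 ≤ ff n := by unfold ff; positivity

lemma max_good [Fintype V] (h : IsW w) (ν : ℝ) (hν : 0 ≤ ν) (k : ℕ) (S : Finset V)
    (hS : (k:ℝ) ^ 2 ≤ |E w S S| - 4 * ν * ff S.card) :
    ∃ X : Finset V, k ≤ X.card ∧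
      ((∀ v ∈ X, 2 * (ν * Real.sqrt (((X.card : ℝ) - 1) * Real.log X.card)) ≤ ∑ u ∈ X, w v u) ∨
       (∀ v ∈ X, 2 * (ν * Real.sqrt (((X.card : ℝ) - 1) * Real.log X.card))
          ≤ - ∑ u ∈ X, w v u)) := by
  obtain ⟨X, -, hX⟩ := Finset.exists_max_image (Finset.univ : Finset (Finset V))
    (fun X => |E w X X| - 4 * ν * ff X.card) ⟨∅, Finset.mem_univ _⟩
  have hXk : (k:ℝ) ^ 2 ≤ |E w X X| - 4 * ν * ff X.card := hS.trans (hX S (Finset.mem_univ _))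
  refine ⟨X, ?_, ?_⟩
  · have h1 := E_abs_le h X
    have h2 : 0 ≤ 4 * ν * ff X.card := mul_nonneg (by linarith) (ff_nonneg _)
    have h3 : (k:ℝ) ^ 2 ≤ (X.card : ℝ) ^ 2 := by linarith
    have := (pow_le_pow_iff_left₀ (Nat.cast_nonneg k) (Nat.cast_nonneg _) two_ne_zero).1 h3
    exact_mod_cast this
  · have key : ∀ v ∈ X, |E w (X.erase v) (X.erase v)| +
        4 * (ν * Real.sqrt (((X.card : ℝ) - 1) * Real.log X.card)) ≤ |E w X X| := by
      intro v hv
      have h1 := hX (X.erase v) (Finset.mem_univ _)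
      have h2 := ff_incr (X.erase v).card
      rw [Finset.card_erase_add_one hv] at h2
      have h3 : ((X.erase v).card : ℝ) = (X.card : ℝ) - 1 := by
        rw [← Finset.card_erase_add_one hv]; push_cast; ring
      rw [h3] at h2
      have := mul_le_mul_of_nonneg_left h2 hν
      linarith
    rcases le_total 0 (E w X X) with h0 | h0
    · left
      intro v hv
      have h1 := key v hv
      have h2 := E_erase h hv
      rw [abs_of_nonneg h0] at h1
      have := le_abs_self (E w (X.erase v) (X.erase v))
      linarith
    · right
      intro v hv
      have h1 := key v hv
      have h2 := E_erase h hv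
      rw [abs_of_nonpos h0] at h1
      have := neg_le_abs (E w (X.erase v) (X.erase v))
      linarith

lemma zero_case [Fintype V] (h : IsW w) (k : ℕ) (hk : 1 ≤ k)
    (hN1 : (k:ℝ) ^ 4 ≤ (Fintype.card V : ℝ) ^ 3) (hN2 : 1000 * k ≤ Fintype.card V) :
    ∃ X : Finset V, k ≤ X.card ∧
      ((∀ v ∈ X, 0 ≤ ∑ u ∈ X, w v u) ∨ (∀ v ∈ X, 0 ≤ - ∑ u ∈ X, w v u)) := by
  by_contra hcon
  push Not at hcon
  set N := Fintype.card V with hN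
  have hM : ∀ S, |E w S S| ≤ (k:ℝ) ^ 2 := by
    intro S
    by_contra hS
    push Not at hS
    obtain ⟨X, hXk, hX⟩ := max_good h 0 le_rfl k S (by simpa using hS.le)
    simp only [zero_mul, mul_zero] at hX
    obtain ⟨⟨v, hv, hv1⟩, ⟨u, hu, hu1⟩⟩ := hcon X hXk
    rcases hX with hX | hX
    · linarith [hX v hv]
    · linarith [hX u hu]
  have hg1 : ∀ X : Finset V, (∀ v ∈ X, 0 ≤ ∑ u ∈ X, w v u) → X.card ≤ k := by
    intro X hX
    by_contra hc
    obtain ⟨⟨v, hv, hv1⟩, _⟩ := hcon X (by omega)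
    linarith [hX v hv]
  have hg2 : ∀ X : Finset V, (∀ v ∈ X, 0 ≤ ∑ u ∈ X, - w v u) → X.card ≤ k := by
    intro X hX
    by_contra hc
    obtain ⟨_, ⟨v, hv, hv1⟩⟩ := hcon X (by omega)
    have := hX v hv
    rw [Finset.sum_neg_distrib] at this
    linarith
  set d : ℝ := (k:ℝ) ^ 2 / 4096 with hd
  have hk0 : (0:ℝ) < k := by exact_mod_cast hk
  have hd0 : 0 < d := by positivity
  have hES : ∀ U : Finset V, N ≤ 4 * U.card → ∃ S ⊆ U, d ≤ |E w S S| := by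
    intro U hU
    obtain ⟨S, hSU, _, hS⟩ := erdos_spencer h U 1 (N / 32) (by omega) (by omega)
    refine ⟨S, hSU, le_trans ?_ hS⟩
    have hb : (N:ℝ) / 64 ≤ ((N / 32 : ℕ) : ℝ) := by
      have : N ≤ 64 * (N / 32) := by omega
      have : (N:ℝ) ≤ 64 * ((N / 32 : ℕ) : ℝ) := by exact_mod_cast this
      linarith
    have hsq : Real.sqrt N / 8 ≤ Real.sqrt ((N / 32 : ℕ) : ℝ) := by
      apply Real.le_sqrt_of_sq_le
      rw [div_pow, Real.sq_sqrt (Nat.cast_nonneg _)]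
      linarith
    have hk2 : (k:ℝ) ^ 2 ≤ N * Real.sqrt N := by
      apply (pow_le_pow_iff_left₀ (by positivity) (by positivity) two_ne_zero).1
      rw [mul_pow, Real.sq_sqrt (Nat.cast_nonneg _)]
      nlinarith
    have := mul_le_mul hb hsq (by positivity) (by positivity)
    rw [hd]
    simp only [one_mul, Nat.cast_one, mul_one]
    linarith
  have fin : ∀ (w' : V → V → ℝ) (_ : IsW w') (U : Finset V)
      (_ : ∀ P ⊆ U, 4 * P.card ≤ N → ∃ S ⊆ U \ P, d ≤ E w' S S)
      (_ : ∀ S, |E w' S S| ≤ (k:ℝ) ^ 2)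
      (_ : ∀ X : Finset V, (∀ v ∈ X, 0 ≤ ∑ u ∈ X, w' v u) → X.card ≤ k), False := by
    intro w' hw' U hU hM' hg
    obtain ⟨P, _, _, hP, _⟩ := greedy hw' U k d ((k:ℝ) ^ 2) 200 hd0.le
      (fun P hP hPc => hU P hP (by omega)) hM' hg 200 le_rfl
    have := (abs_le.1 (hM' P)).1
    rw [hd] at hP
    norm_num at hP
    nlinarith
  by_cases hpos : ∀ U : Finset V, N ≤ 2 * U.card → ∃ S ⊆ U, d ≤ E w S S
  · refine fin w h Finset.univ ?_ hM hg1
    intro P hP hPc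
    apply hpos
    rw [Finset.card_sdiff_of_subset hP, Finset.card_univ]
    omega
  · push Not at hpos
    obtain ⟨U, hUc, hU⟩ := hpos
    refine fin _ h.neg U ?_ ?_ hg2
    · intro P hP hPc
      obtain ⟨S, hS, hSd⟩ := hES (U \ P) (by rw [Finset.card_sdiff_of_subset hP]; omega)
      refine ⟨S, hS, ?_⟩
      rw [E_neg]
      rcases le_abs.1 hSd with h1 | h1
      · exact absurd (hU S (hS.trans Finset.sdiff_subset)) (by linarith)
      · exact h1
    · intro S; rw [E_neg, abs_neg]; exact hM S

/-- weight of a graph -/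
noncomputable def gw {N : ℕ} (G : SimpleGraph (Fin N)) (u v : Fin N) : ℝ :=
  if u = v then 0 else if G.Adj u v then 1 else -1

lemma gw_isW {N : ℕ} (G : SimpleGraph (Fin N)) : IsW (gw G) where
  symm u v := by simp only [gw, G.adj_comm, eq_comm]
  diag u := by simp [gw]
  off u v huv := by simp only [gw, if_neg huv]; split_ifs <;> norm_num

lemma gw_sum {N : ℕ} (G : SimpleGraph (Fin N)) (S : Finset (Fin N)) (v : Fin N) (hv : v ∈ S) :
    ∑ u ∈ S, gw G v u = 2 * ((S.filter (G.Adj v)).card : ℝ) - ((S.card : ℝ) - 1) := by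
  have : ∀ u, gw G v u = 2 * (if G.Adj v u then 1 else 0) - 1 + (if v = u then 1 else 0) := by
    intro u
    by_cases h : v = u
    · subst h; simp [gw]
    · simp only [gw, if_neg h]; split_ifs <;> norm_num
  simp only [this, Finset.sum_add_distrib, Finset.sum_sub_distrib, ← Finset.mul_sum]
  simp [hv]
  ring

lemma gw_sum_compl {N : ℕ} (G : SimpleGraph (Fin N)) (S : Finset (Fin N)) (v : Fin N)
    (hv : v ∈ S) :
    - ∑ u ∈ S, gw G v u = 2 * ((S.filter (Gᶜ.Adj v)).card : ℝ) - ((S.card : ℝ) - 1) := by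
  have h := gw_sum Gᶜ S v hv
  suffices e : - ∑ u ∈ S, gw G v u = ∑ u ∈ S, gw Gᶜ v u by
    rw [e]; convert h
  rw [← Finset.sum_neg_distrib]
  refine Finset.sum_congr rfl fun u _ => ?_
  simp only [gw, SimpleGraph.compl_adj]
  by_cases h : v = u
  · simp [h]
  · by_cases h' : G.Adj v u <;> simp [h, h']

lemma pos_case [Fintype V] (h : IsW w) (ν : ℝ) (hν : 0 < ν) (k q : ℕ) (T : ℝ) (hT : 0 < T)
    (hk : 1 ≤ k)
    (hTk : (k:ℝ) ^ 4 = T ^ 3) (hq1 : 250000 * ν ^ 2 * Real.log k ≤ q) (hq : 1 ≤ q)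
    (hqT : 4 * (q:ℝ) ≤ T) (hlog : 1 ≤ 5 * ν * Real.sqrt (Real.log k))
    (hN : T * 7 ^ q ≤ Fintype.card V) :
    ∃ X : Finset V, k ≤ X.card ∧
      ((∀ v ∈ X, 2 * (ν * Real.sqrt (((X.card : ℝ) - 1) * Real.log X.card)) ≤ ∑ u ∈ X, w v u) ∨
       (∀ v ∈ X, 2 * (ν * Real.sqrt (((X.card : ℝ) - 1) * Real.log X.card))
          ≤ - ∑ u ∈ X, w v u)) := by
  have hq0 : (0:ℝ) < q := by exact_mod_cast hq
  have hk0 : (0:ℝ) < k := by exact_mod_cast hk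
  set b := ⌊T / (2 * q)⌋₊ with hb
  have hb1 : (b:ℝ) ≤ T / (2 * q) := Nat.floor_le (by positivity)
  have hb2 : T / (2 * q) < b + 1 := Nat.lt_floor_add_one _
  set m : ℕ := q * b with hm
  have hmR : (m:ℝ) = q * b := by simp [hm]
  have hm1 : (m:ℝ) ≤ T / 2 := by
    rw [le_div_iff₀ (by positivity)] at hb1
    rw [hmR]; linarith
  have hm2 : T / 4 ≤ (m:ℝ) := by
    rw [div_lt_iff₀ (by positivity)] at hb2
    rw [hmR]; nlinarith
  have hm0 : (0:ℝ) < m := by linarith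
  have hb0 : 0 < b := by
    rcases Nat.eq_zero_or_pos b with h0 | h0
    · rw [hmR, h0] at hm0; simp at hm0
    · exact h0
  have hbig : m + m * 7 ^ q ≤ (Finset.univ : Finset V).card := by
    have h7 : (1:ℝ) ≤ 7 ^ q := one_le_pow₀ (by norm_num)
    have : (m:ℝ) + m * 7 ^ q ≤ Fintype.card V := by nlinarith
    rw [Finset.card_univ]
    exact_mod_cast this
  obtain ⟨S, _, hSc, hS⟩ := erdos_spencer h Finset.univ q b hb0 hbig
  refine max_good h ν hν.le k S ?_
  have hL : 0 ≤ Real.log k := Real.log_natCast_nonneg k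
  set L := Real.log k with hLd
  -- lower bound on the discrepancy
  have e1 : (m:ℝ) * q * Real.sqrt b = m * Real.sqrt m * Real.sqrt q := by
    rw [hmR, Real.sqrt_mul hq0.le]
    have := Real.mul_self_sqrt hq0.le
    linear_combination (-(q:ℝ) * b * Real.sqrt b) * this
  have e2 : 500 * ν * Real.sqrt L ≤ Real.sqrt q := by
    apply Real.le_sqrt_of_sq_le
    rw [mul_pow, Real.sq_sqrt hL]
    linarith
  -- upper bound on the penalty
  have e3 : ff S.card ≤ 4 * (m * Real.sqrt m * Real.sqrt L) := by
    have c1 : (S.card : ℝ) ≤ 2 * m := by exact_mod_cast hSc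
    have c2 : Real.log S.card ≤ 2 * L := by
      rcases Nat.eq_zero_or_pos S.card with h0 | h0
      · rw [h0]; simp; exact hL
      · have : (S.card : ℝ) ≤ (k:ℝ) ^ 2 := by
          have hk1 : (1:ℝ) ≤ k := by exact_mod_cast hk
          have hTk2 : T ≤ (k:ℝ) ^ 2 := by
            apply (pow_le_pow_iff_left₀ hT.le (by positivity) three_ne_zero).1
            rw [← hTk, ← pow_mul]
            exact pow_le_pow_right₀ hk1 (by norm_num)
          linarith
        have h2 := Real.log_le_log (by exact_mod_cast h0) this
        rw [Real.log_pow] at h2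
        exact_mod_cast h2
    unfold ff
    have c3 : Real.sqrt (S.card * Real.log S.card) ≤ 2 * (Real.sqrt m * Real.sqrt L) := by
      apply Real.sqrt_le_iff.2 ⟨by positivity, ?_⟩
      rw [mul_pow, mul_pow, Real.sq_sqrt hm0.le, Real.sq_sqrt hL]
      have := mul_le_mul c1 c2 (Real.log_natCast_nonneg _) (by positivity)
      linarith
    have := mul_le_mul c1 c3 (by positivity) (by positivity)
    linarith
  have e4 : (k:ℝ) ^ 2 ≤ 8 * (m * Real.sqrt m) := by
    apply (pow_le_pow_iff_left₀ (by positivity) (by positivity) two_ne_zero).1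
    rw [mul_pow, mul_pow, Real.sq_sqrt hm0.le]
    have : T ^ 3 ≤ (4 * m) ^ 3 := pow_le_pow_left₀ hT.le (by linarith) 3
    nlinarith
  rw [e1] at hS
  have hms : 0 ≤ m * Real.sqrt m := by positivity
  have f1 := mul_le_mul_of_nonneg_left e2 hms
  have f2 := mul_le_mul_of_nonneg_left e3 (show 0 ≤ 4 * ν by linarith)
  have f3 := mul_le_mul_of_nonneg_left hlog hms
  linarith

end QR

open QR Filter

theorem quasi_ramsey_upper_discrepancy (ν c : ℝ) (hν : 0 ≤ ν) (hc : 4 / 3 < c) :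
    ∀ᶠ k : ℕ in Filter.atTop, ∀ N : ℕ,
      (k : ℝ) ^ (c * 10 ^ 6 * ν ^ 2 + 4 / 3) ≤ (N : ℝ) →
      ∀ G : SimpleGraph (Fin N), ∃ S : Finset (Fin N), k ≤ S.card ∧
        ((∀ v ∈ S,
            ((S.card : ℝ) - 1) / 2 +
                ν * Real.sqrt (((S.card : ℝ) - 1) * Real.log (S.card : ℝ)) ≤
              ((S.filter (G.Adj v)).card : ℝ)) ∨
         (∀ v ∈ S,
            ((S.card : ℝ) - 1) / 2 +
                ν * Real.sqrt (((S.card : ℝ) - 1) * Real.log (S.card : ℝ)) ≤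
              ((S.filter (Gᶜ.Adj v)).card : ℝ))) := by
  suffices hmain : ∀ᶠ k : ℕ in Filter.atTop, ∀ N : ℕ,
      (k : ℝ) ^ (c * 10 ^ 6 * ν ^ 2 + 4 / 3) ≤ (N : ℝ) →
      ∀ G : SimpleGraph (Fin N), ∃ X : Finset (Fin N), k ≤ X.card ∧
      ((∀ v ∈ X, 2 * (ν * Real.sqrt (((X.card : ℝ) - 1) * Real.log X.card))
          ≤ ∑ u ∈ X, gw G v u) ∨
       (∀ v ∈ X, 2 * (ν * Real.sqrt (((X.card : ℝ) - 1) * Real.log X.card))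
          ≤ - ∑ u ∈ X, gw G v u)) by
    filter_upwards [hmain] with k hk N hN G
    obtain ⟨X, hXk, hX⟩ := hk N hN G
    refine ⟨X, hXk, hX.imp (fun h v hv => ?_) (fun h v hv => ?_)⟩
    · have h1 := h v hv
      rw [gw_sum G X v hv] at h1
      linarith
    · have h1 := h v hv
      rw [gw_sum_compl G X v hv] at h1
      linarith
  have hT3 : ∀ k : ℕ, ((k:ℝ) ^ (4 / 3 : ℝ)) ^ 3 = (k:ℝ) ^ 4 := by
    intro k
    rw [← Real.rpow_natCast, ← Real.rpow_mul (Nat.cast_nonneg k), ← Real.rpow_natCast]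
    norm_num
  have hnat : Tendsto (fun k : ℕ => (k:ℝ)) atTop atTop := tendsto_natCast_atTop_atTop
  rcases hν.eq_or_lt with rfl | hν
  · filter_upwards [eventually_ge_atTop 1000000000] with k hk N hN G
    have hk' : (1000000000:ℝ) ≤ k := by exact_mod_cast hk
    have hk0 : (0:ℝ) ≤ k := by linarith
    have hN' : (k:ℝ) ^ (4 / 3 : ℝ) ≤ N := by simpa using hN
    have hN1 : (k:ℝ) ^ 4 ≤ (N:ℝ) ^ 3 := by
      rw [← hT3]
      exact pow_le_pow_left₀ (by positivity) hN' 3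
    have hN2 : 1000 * (k:ℝ) ≤ N := by
      apply (pow_le_pow_iff_left₀ (by positivity) (by positivity) three_ne_zero).1
      refine le_trans ?_ hN1
      have : (0:ℝ) ≤ k ^ 3 := by positivity
      nlinarith
    have := zero_case (gw_isW G) k (by omega) (by simpa using hN1)
      (by rw [Fintype.card_fin]; exact_mod_cast hN2)
    simpa using this
  · set γ : ℝ := 4 / 3 * 10 ^ 6 * ν ^ 2 with hγ
    have hγ0 : 0 < γ := by positivity
    have hlogk : Tendsto (fun k : ℕ => Real.log k) atTop atTop :=
      Real.tendsto_log_atTop.comp hnat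
    have hsmall : ∀ᶠ k : ℕ in atTop, Real.log k ≤ (1 / (2 * γ)) * (k:ℝ) := by
      have := (Real.isLittleO_log_id_atTop.bound (show 0 < 1 / (2 * γ) by positivity))
      have := hnat.eventually this
      filter_upwards [this] with k hk
      simp only [id, Real.norm_eq_abs, Nat.abs_cast] at hk
      exact (le_abs_self _).trans hk
    filter_upwards [eventually_ge_atTop 1, hsmall,
      hlogk.eventually_ge_atTop (1 / (25 * ν ^ 2)),
      hlogk.eventually_ge_atTop (4 / γ)] with k hk hs hl1 hl2 N hN G
    have hk1 : (1:ℝ) ≤ k := by exact_mod_cast hk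
    have hk0 : (0:ℝ) < k := by linarith
    have hL : 0 ≤ Real.log k := Real.log_nonneg hk1
    rw [div_le_iff₀ hγ0] at hl2
    rw [div_le_iff₀ (by positivity)] at hl1
    have hq1 := Nat.floor_le (show 0 ≤ γ / 2 * Real.log k by positivity)
    have hq2 := Nat.lt_floor_add_one (γ / 2 * Real.log k)
    set q := ⌊γ / 2 * Real.log k⌋₊
    have hqR : (1:ℝ) ≤ q := by nlinarith
    refine pos_case (gw_isW G) ν hν k q ((k:ℝ) ^ (4 / 3 : ℝ)) (by positivity) hk (hT3 k).symm
      ?_ (by exact_mod_cast hqR) ?_ ?_ ?_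
    · have : γ / 4 * Real.log k ≤ q := by linarith
      refine le_trans ?_ this
      rw [hγ]
      have : 0 ≤ ν ^ 2 * Real.log k := by positivity
      nlinarith
    · have h1 : (k:ℝ) ≤ (k:ℝ) ^ (4 / 3 : ℝ) := by
        conv_lhs => rw [← Real.rpow_one (k:ℝ)]
        exact Real.rpow_le_rpow_of_exponent_le hk1 (by norm_num)
      have h2 : 2 * γ * Real.log k ≤ k := by
        have hs' := hs
        rw [one_div, inv_mul_eq_div, le_div_iff₀ (mul_pos two_pos hγ0)] at hs'
        linarith
      linarith
    · have : 1 / (5 * ν) ≤ Real.sqrt (Real.log k) := by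
        apply Real.le_sqrt_of_sq_le
        rw [div_pow, div_le_iff₀ (by positivity)]
        nlinarith
      rw [div_le_iff₀ (by positivity)] at this
      linarith
    · rw [Fintype.card_fin]
      refine le_trans ?_ hN
      have h7 : (7:ℝ) ^ q ≤ (k:ℝ) ^ γ := by
        have he : (7:ℝ) ≤ Real.exp 2 := by
          have h1 := Real.exp_one_gt_d9
          have : Real.exp 2 = Real.exp 1 * Real.exp 1 := by
            rw [← Real.exp_add]; norm_num
          rw [this]
          nlinarith
        calc (7:ℝ) ^ q ≤ Real.exp 2 ^ q := pow_le_pow_left₀ (by norm_num) he q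
          _ = Real.exp (q * 2) := by rw [← Real.exp_nat_mul]
          _ ≤ Real.exp (Real.log k * γ) := Real.exp_le_exp.2 (by linarith)
          _ = (k:ℝ) ^ γ := by rw [Real.rpow_def_of_pos hk0]
      calc (k:ℝ) ^ (4 / 3 : ℝ) * 7 ^ q ≤ (k:ℝ) ^ (4 / 3 : ℝ) * (k:ℝ) ^ γ := by gcongr
        _ = (k:ℝ) ^ (4 / 3 + γ) := by rw [Real.rpow_add hk0]
        _ ≤ _ := by
          apply Real.rpow_le_rpow_of_exponent_le hk1
          have : 0 ≤ ν ^ 2 := by positivity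
          rw [hγ]
          nlinarith
end

section
/- There exists a constant C > 0 such that for all sufficiently large k, every graph G on at least C·k·ln k vertices satisfies: G or its complement contains an induced subgraph H on exactly k vertices with minimum degree at least (1/2)(k−1) − 2·√((k−1)·ln k). -/
open scoped Classical

section thinning
variable {V : Type*} [DecidableEq V]

theorem choose_half (a L j : ℕ) (h : 2 * a ≤ L) : 2 ^ j * a.choose j ≤ L.choose j := by
  have key : ∀ j, 2 ^ j * a.descFactorial j ≤ L.descFactorial j := by
    intro j
    induction j with
    | zero => simp
    | succ j ih =>
      rw [Nat.descFactorial_succ, Nat.descFactorial_succ]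
      calc 2 ^ (j+1) * ((a - j) * a.descFactorial j)
          = (2 * (a - j)) * (2 ^ j * a.descFactorial j) := by ring
        _ ≤ (L - j) * L.descFactorial j := Nat.mul_le_mul (by omega) ih
  have := key j
  rw [Nat.descFactorial_eq_factorial_mul_choose, Nat.descFactorial_eq_factorial_mul_choose] at this
  have hp := Nat.factorial_pos j
  have h' : j.factorial * (2 ^ j * a.choose j) ≤ j.factorial * L.choose j := by linarith
  exact le_of_mul_le_mul_left h' hp

theorem mgf_bound (U A : Finset V) (hA : A ⊆ U) (h2 : 2 * A.card ≤ U.card) (n : ℕ)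
    (hn : n ≤ U.card) (y : ℝ) (hy : 0 ≤ y) :
    ∑ S ∈ U.powersetCard n, (1 + y) ^ (S ∩ A).card ≤ (U.card.choose n : ℝ) * (1 + y / 2) ^ n := by
  have h1 : ∀ S ∈ U.powersetCard n, (1 + y) ^ (S ∩ A).card
      = ∑ T ∈ A.powerset, if T ⊆ S then y ^ T.card else 0 := by
    intro S hS
    have e : (1 + y) ^ (S ∩ A).card = ∑ T ∈ (S ∩ A).powerset, y ^ T.card := by
      have := Finset.sum_pow_mul_eq_add_pow y 1 (S ∩ A)
      simp only [one_pow, mul_one] at this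
      rw [this, add_comm]
    rw [e, ← Finset.sum_filter]
    apply Finset.sum_congr _ (fun _ _ => rfl)
    ext T
    simp only [Finset.mem_powerset, Finset.mem_filter, Finset.subset_inter_iff]
    tauto
  rw [Finset.sum_congr rfl h1, Finset.sum_comm]
  have h3 : ∀ T ∈ A.powerset, (∑ S ∈ U.powersetCard n, if T ⊆ S then y ^ T.card else 0)
      ≤ if T.card ≤ n then ((U.card - T.card).choose (n - T.card) : ℝ) * y ^ T.card else 0 := by
    intro T hT
    have hTU : T ⊆ U := (Finset.mem_powerset.1 hT).trans hA
    rw [← Finset.sum_filter, Finset.sum_const, nsmul_eq_mul]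
    split_ifs with hc
    · apply mul_le_mul_of_nonneg_right _ (by positivity)
      rw [← Finset.card_sdiff_of_subset hTU, ← Finset.card_powersetCard]
      norm_cast
      apply Finset.card_le_card_of_injOn (fun S => S \ T)
      · intro S hS
        simp only [Finset.coe_filter, Finset.mem_powersetCard, Set.mem_ofPred_eq] at hS
        simp only [Finset.mem_coe, Finset.mem_powersetCard]
        refine ⟨Finset.sdiff_subset_sdiff hS.1.1 le_rfl, ?_⟩
        rw [Finset.card_sdiff_of_subset hS.2, hS.1.2]
      · intro S hS S' hS' hE
        simp only [Finset.coe_filter, Finset.mem_powersetCard, Set.mem_ofPred_eq] at hS hS'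
        simp only at hE
        rw [← Finset.sdiff_union_of_subset hS.2, hE, Finset.sdiff_union_of_subset hS'.2]
    · rw [Finset.filter_false_of_mem]
      · simp
      · intro S hS hTS
        have := Finset.card_le_card hTS
        rw [(Finset.mem_powersetCard.1 hS).2] at this
        exact hc this
  refine (Finset.sum_le_sum h3).trans ?_
  rw [Finset.sum_powerset_apply_card
    (fun j => if j ≤ n then ((U.card - j).choose (n - j) : ℝ) * y ^ j else 0)]
  have h4 : ∀ j, A.card.choose j • (if j ≤ n then ((U.card - j).choose (n - j) : ℝ) * y ^ j else 0)
      ≤ if j ≤ n then (U.card.choose n : ℝ) * (n.choose j * (y/2)^j) else 0 := by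
    intro j
    split_ifs with hj
    · have a1 := choose_half A.card U.card j h2
      have a2 := Nat.choose_mul (n := U.card) (k := n) (s := j) hj
      have a1' : (2:ℝ)^j * A.card.choose j ≤ U.card.choose j := by exact_mod_cast a1
      have a2' : (U.card.choose n : ℝ) * n.choose j
        = U.card.choose j * (U.card - j).choose (n - j) := by exact_mod_cast a2
      rw [nsmul_eq_mul, ← mul_assoc, ← mul_assoc, a2', div_pow, mul_div_assoc',
        le_div_iff₀ (by positivity)]
      have : 0 ≤ ((U.card - j).choose (n - j) : ℝ) * y ^ j := by positivity
      nlinarith [mul_le_mul_of_nonneg_right a1' this]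
    · simp
  refine (Finset.sum_le_sum (fun j _ => h4 j)).trans ?_
  rw [← Finset.sum_filter, add_comm 1 (y/2), add_pow, Finset.mul_sum]
  refine (Finset.sum_le_sum_of_subset_of_nonneg (t := Finset.range (n+1)) ?_ ?_).trans ?_
  · intro j hj
    simp only [Finset.mem_filter, Finset.mem_range] at *
    omega
  · intros; positivity
  · apply le_of_eq
    apply Finset.sum_congr rfl
    intros; ring

theorem exists_thin (W : Finset V) (A : V → Finset V) (k : ℕ) (hk : 1 ≤ k) (hW : k ≤ W.card)
    (hA : ∀ v ∈ W, A v ⊆ W.erase v) (h2 : ∀ v ∈ W, 2 * (A v).card ≤ W.card - 1)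
    (y : ℝ) (hy : 0 ≤ y) :
    ∃ S ⊆ W, S.card = k ∧ ∀ v ∈ S, (1 + y) ^ (S.erase v ∩ A v).card ≤ k * (1 + y / 2) ^ (k-1) := by
  have dc : ∑ S ∈ W.powersetCard k, ∑ v ∈ S, (1 + y) ^ (S.erase v ∩ A v).card
      = ∑ v ∈ W, ∑ S ∈ (W.erase v).powersetCard (k-1), (1 + y) ^ (S ∩ A v).card := by
    rw [Finset.sum_sigma', Finset.sum_sigma']
    refine Finset.sum_bij' (fun p _ => ⟨p.2, p.1.erase p.2⟩) (fun p _ => ⟨insert p.1 p.2, p.1⟩)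
      ?_ ?_ ?_ ?_ ?_
    · rintro ⟨S, v⟩ h
      simp only [Finset.mem_sigma, Finset.mem_powersetCard] at h ⊢
      exact ⟨h.1.1 h.2, Finset.erase_subset_erase _ h.1.1, by
        rw [Finset.card_erase_of_mem h.2, h.1.2]⟩
    · rintro ⟨v, S⟩ h
      simp only [Finset.mem_sigma, Finset.mem_powersetCard] at h ⊢
      have hv : v ∉ S := fun hh => by simpa using h.2.1 hh
      refine ⟨⟨Finset.insert_subset h.1 (h.2.1.trans (Finset.erase_subset _ _)), ?_⟩, by simp⟩
      rw [Finset.card_insert_of_notMem hv, h.2.2]; omega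
    · rintro ⟨S, v⟩ h
      simp only [Finset.mem_sigma, Finset.mem_powersetCard] at h ⊢
      simp [Finset.insert_erase h.2]
    · rintro ⟨v, S⟩ h
      simp only [Finset.mem_sigma, Finset.mem_powersetCard] at h ⊢
      have hv : v ∉ S := fun hh => by simpa using h.2.1 hh
      simp [hv]
    · rintro ⟨S, v⟩ h
      rfl
  have up : ∑ S ∈ W.powersetCard k, ∑ v ∈ S, (1 + y) ^ (S.erase v ∩ A v).card
      ≤ ∑ S ∈ W.powersetCard k, (k * (1 + y / 2) ^ (k-1) : ℝ) := by
    rw [dc]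
    calc _ ≤ ∑ v ∈ W, ((W.card - 1).choose (k-1) : ℝ) * (1 + y / 2) ^ (k-1) := by
            apply Finset.sum_le_sum
            intro v hv
            have hc : (W.erase v).card = W.card - 1 := Finset.card_erase_of_mem hv
            rw [← hc]
            exact mgf_bound _ _ (hA v hv) (by rw [hc]; exact h2 v hv) _ (by omega) y hy
      _ = _ := by
            rw [Finset.sum_const, Finset.sum_const, Finset.card_powersetCard, nsmul_eq_mul,
              nsmul_eq_mul, ← mul_assoc, ← mul_assoc]
            congr 1
            have := Nat.add_one_mul_choose_eq (W.card - 1) (k-1)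
            rw [show W.card - 1 + 1 = W.card by omega, show k - 1 + 1 = k by omega] at this
            exact_mod_cast this
  obtain ⟨S, hS, hle⟩ := Finset.exists_le_of_sum_le (Finset.powersetCard_nonempty.2 hW) up
  obtain ⟨hSW, hSk⟩ := Finset.mem_powersetCard.1 hS
  refine ⟨S, hSW, hSk, fun v hv => le_trans ?_ hle⟩
  exact Finset.single_le_sum (f := fun v => (1 + y) ^ (S.erase v ∩ A v).card)
    (fun _ _ => by positivity) hv

theorem numeric (k m : ℕ) (hk : 2 ≤ k) (s : ℝ)
    (hs : s = 2 * Real.sqrt (Real.log k / (k - 1)))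
    (h : (1 + (Real.exp s - 1)) ^ m ≤ k * (1 + (Real.exp s - 1) / 2) ^ (k-1)) :
    (m : ℝ) ≤ ((k : ℝ) - 1) / 2 + 2 * Real.sqrt (((k : ℝ) - 1) * Real.log (k : ℝ)) := by
  have hk1 : (0:ℝ) < (k:ℝ) - 1 := by
    have : (2:ℝ) ≤ k := by exact_mod_cast hk
    linarith
  have hl : 0 < Real.log k := Real.log_pos (by linarith)
  have hk0 : (0:ℝ) < k := by linarith
  set r := Real.sqrt (Real.log k / (k - 1)) with hr
  have hrp : 0 < r := Real.sqrt_pos.2 (by positivity)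
  have hr2 : r ^ 2 * (k - 1) = Real.log k := by
    rw [hr, Real.sq_sqrt (by positivity)]; field_simp
  have hsq : Real.sqrt (((k : ℝ) - 1) * Real.log (k : ℝ)) = r * (k - 1) := by
    rw [← hr2, show ((k:ℝ)-1) * (r^2 * (k-1)) = (r * (k-1))^2 by ring, Real.sqrt_sq (by positivity)]
  have h1 : 1 + (Real.exp s - 1) / 2 ≤ Real.exp (s/2 + s^2/8) := by
    have := Real.cosh_le_exp_half_sq (s/2)
    rw [Real.cosh_eq] at this
    rw [Real.exp_add, show s^2/8 = (s/2)^2/2 by ring]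
    have e : 1 + (Real.exp s - 1) / 2 = Real.exp (s/2) * ((Real.exp (s/2) + Real.exp (-(s/2)))/2) := by
      rw [mul_div_assoc', mul_add, ← Real.exp_add, ← Real.exp_add]
      simp; ring
    rw [e]
    gcongr
  have h0 : 0 ≤ 1 + (Real.exp s - 1) / 2 := by
    have := Real.exp_pos s; linarith
  have h2 : Real.exp (m * s) ≤ Real.exp (Real.log k + (k - 1) * (s/2 + s^2/8)) := by
    rw [Real.exp_add, Real.exp_log hk0, Real.exp_nat_mul,
      show ((k:ℝ) - 1) = ((k-1 : ℕ) : ℝ) by rw [Nat.cast_sub (by omega)]; simp, Real.exp_nat_mul]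
    refine le_trans (by simpa using h) ?_
    gcongr
  rw [Real.exp_le_exp, ← hr2, hs] at h2
  rw [hsq]
  have h3 : r * ((m:ℝ) * 2) ≤ r * ((k-1) + r * (k-1) * (3/2)) := by nlinarith
  have h4 := le_of_mul_le_mul_left h3 hrp
  nlinarith [mul_pos hrp hk1]

theorem thin_graph (G : SimpleGraph V) (W : Finset V) (k : ℕ) (hk : 2 ≤ k) (hW : k ≤ W.card)
    (h : ∀ v ∈ W, W.card ≤ 2 * (W.filter (G.Adj v)).card + 1) :
    ∃ S : Finset V, S.card = k ∧ ∀ v ∈ S,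
      ((k : ℝ) - 1) / 2 - 2 * Real.sqrt (((k : ℝ) - 1) * Real.log (k : ℝ)) ≤
              ((S.filter (G.Adj v)).card : ℝ) := by
  have split : ∀ (S : Finset V), ∀ v ∈ S, (S.filter (G.Adj v)).card
      + ((S.erase v).filter (fun u => ¬ G.Adj v u)).card = S.card - 1 := by
    intro S v hv
    rw [← Finset.card_erase_of_mem hv,
      ← Finset.card_filter_add_card_filter_not (s := S.erase v) (G.Adj v)]
    congr 2
    ext u
    simp only [Finset.mem_filter, Finset.mem_erase]
    constructor
    · rintro ⟨a, b⟩
      exact ⟨⟨b.ne', a⟩, b⟩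
    · rintro ⟨⟨_, a⟩, b⟩
      exact ⟨a, b⟩
  set s := 2 * Real.sqrt (Real.log k / (k - 1)) with hs
  obtain ⟨S, hSW, hSk, hS⟩ := exists_thin W (fun v => (W.erase v).filter (fun u => ¬ G.Adj v u)) k
    (by omega) hW (fun v hv => Finset.filter_subset _ _)
    (fun v hv => by have := split W v hv; have := h v hv; omega)
    (Real.exp s - 1) (by
      have : 0 ≤ s := by positivity
      have := Real.add_one_le_exp s
      linarith)
  refine ⟨S, hSk, fun v hv => ?_⟩
  have h1 := numeric k _ hk s hs (hS v hv)
  have h2 := split S v hv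
  have h3 : S.erase v ∩ (W.erase v).filter (fun u => ¬ G.Adj v u)
      = (S.erase v).filter (fun u => ¬ G.Adj v u) := by
    ext u
    simp only [Finset.mem_inter, Finset.mem_filter, Finset.mem_erase]
    constructor
    · tauto
    · rintro ⟨⟨a, b⟩, c⟩
      exact ⟨⟨a, b⟩, ⟨a, hSW b⟩, c⟩
  rw [h3] at h1
  have h4 : ((S.filter (G.Adj v)).card : ℝ)
      + ((S.erase v).filter (fun u => ¬ G.Adj v u)).card = k - 1 := by
    rw [← Nat.cast_add, h2, hSk, Nat.cast_sub (by omega)]; simp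
  linarith

end thinning

section disc
variable {V : Type*} [DecidableEq V]

noncomputable def qw (G : SimpleGraph V) (x y : V) : ℤ :=
  if x = y then 0 else if G.Adj x y then 1 else -1

theorem qw_symm (G : SimpleGraph V) (x y : V) : qw G x y = qw G y x := by
  unfold qw
  simp only [eq_comm (a := x), G.adj_comm x y]

theorem qw_compl (G : SimpleGraph V) (x y : V) : qw Gᶜ x y = - qw G x y := by
  unfold qw
  by_cases h : x = y <;> by_cases h' : G.Adj x y <;> simp [h, h']

noncomputable def qb (G : SimpleGraph V) (X Y : Finset V) : ℤ := ∑ x ∈ X, ∑ y ∈ Y, qw G x y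

theorem qb_symm (G : SimpleGraph V) (X Y : Finset V) : qb G X Y = qb G Y X := by
  unfold qb
  rw [Finset.sum_comm]
  simp only [qw_symm G]

theorem qb_compl (G : SimpleGraph V) (X Y : Finset V) : qb Gᶜ X Y = - qb G X Y := by
  unfold qb
  simp [qw_compl]

theorem qb_union_left (G : SimpleGraph V) (X Y Z : Finset V) (h : Disjoint X Y) :
    qb G (X ∪ Y) Z = qb G X Z + qb G Y Z := by
  unfold qb
  rw [Finset.sum_union h]

theorem qb_union_right (G : SimpleGraph V) (X Y Z : Finset V) (h : Disjoint X Y) :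
    qb G Z (X ∪ Y) = qb G Z X + qb G Z Y := by
  rw [qb_symm, qb_union_left _ _ _ _ h, qb_symm, qb_symm G Y]

theorem qb_union (G : SimpleGraph V) (X Y : Finset V) (h : Disjoint X Y) :
    qb G (X ∪ Y) (X ∪ Y) = qb G X X + qb G Y Y + 2 * qb G X Y := by
  rw [qb_union_left _ _ _ _ h, qb_union_right _ _ _ _ h, qb_union_right _ _ _ _ h, qb_symm G Y X]
  ring

theorem four_sets (G : SimpleGraph V) (A B C E : Finset V)
    (hAB : Disjoint A B) (hAC : Disjoint A C) (hAE : Disjoint A E)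
    (hBC : Disjoint B C) (hBE : Disjoint B E) (hCE : Disjoint C E)
    (h0 : 0 ≤ qb G A A ∧ 0 ≤ qb G B B ∧ 0 ≤ qb G C C ∧ 0 ≤ qb G E E)
    (hA : ∀ Y ⊆ A ∪ (B ∪ (C ∪ E)), |qb G Y Y| ≤ |qb G A A|)
    (hB : ∀ Y ⊆ B ∪ (C ∪ E), |qb G Y Y| ≤ |qb G B B|)
    (hC : ∀ Y ⊆ C ∪ E, |qb G Y Y| ≤ |qb G C C|) :
    3 * |qb G E E| ≤ 2 * |qb G A A| := by
  obtain ⟨pA, pB, pC, pE⟩ := h0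
  rw [abs_of_nonneg pA] at hA ⊢
  rw [abs_of_nonneg pB] at hB
  rw [abs_of_nonneg pC] at hC
  rw [abs_of_nonneg pE]
  have sAB := (abs_le.1 (hA (A ∪ B) (by grind))).2
  have sAC := (abs_le.1 (hA (A ∪ C) (by grind))).2
  have sAE := (abs_le.1 (hA (A ∪ E) (by grind))).2
  have sBC := (abs_le.1 (hB (B ∪ C) (by grind))).2
  have sBE := (abs_le.1 (hB (B ∪ E) (by grind))).2
  have sCE := (abs_le.1 (hC (C ∪ E) (by grind))).2
  have sE := (abs_le.1 (hC E (by grind))).2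
  have sall := (abs_le.1 (hA _ subset_rfl)).1
  have d1 : Disjoint B (C ∪ E) := Finset.disjoint_union_right.2 ⟨hBC, hBE⟩
  have d2 : Disjoint A (B ∪ (C ∪ E)) :=
    Finset.disjoint_union_right.2 ⟨hAB, Finset.disjoint_union_right.2 ⟨hAC, hAE⟩⟩
  rw [qb_union _ _ _ d2, qb_union _ _ _ d1, qb_union _ _ _ hCE, qb_union_right G _ _ A d1,
    qb_union_right G _ _ A hCE, qb_union_right G _ _ B hCE] at sall
  rw [qb_union _ _ _ (by assumption)] at sAB sAC sAE sBC sBE sCE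
  linarith

theorem pigeon : ∀ f : Fin 7 → Bool, ∃ i j l m : Fin 7, i < j ∧ j < l ∧ l < m ∧
    f i = f j ∧ f j = f l ∧ f l = f m := by
  intro f
  have key : ∀ b : Bool, 4 ≤ (Finset.univ.filter (fun i => f i = b)).card →
      ∃ i j l m : Fin 7, i < j ∧ j < l ∧ l < m ∧ f i = f j ∧ f j = f l ∧ f l = f m := by
    intro b hb
    let e := Finset.orderEmbOfCardLe _ hb
    have he : ∀ x, f (e x) = b := fun x => by
      simpa using Finset.orderEmbOfCardLe_mem _ hb x
    refine ⟨e 0, e 1, e 2, e 3, ?_, ?_, ?_, ?_, ?_, ?_⟩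
    · exact e.strictMono (by decide)
    · exact e.strictMono (by decide)
    · exact e.strictMono (by decide)
    all_goals rw [he, he]
  have hs := Finset.card_filter_add_card_filter_not (s := (Finset.univ : Finset (Fin 7)))
    (fun i => f i = true)
  simp only [Bool.not_eq_true, Finset.card_univ, Fintype.card_fin] at hs
  by_cases h : 4 ≤ (Finset.univ.filter (fun i => f i = true)).card
  · exact key true h
  · exact key false (by omega)

theorem min_deg (G : SimpleGraph V) (W : Finset V) (h0 : 0 ≤ qb G W W)
    (h : ∀ Y ⊆ W, |qb G Y Y| ≤ |qb G W W|) :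
    ∀ v ∈ W, W.card ≤ 2 * (W.filter (G.Adj v)).card + 1 := by
  intro v hv
  have h1 := (abs_le.1 (h _ (Finset.erase_subset v W))).2
  rw [abs_of_nonneg h0] at h1
  have hd : Disjoint {v} (W.erase v) := by simp
  have e : {v} ∪ W.erase v = W := by
    rw [← Finset.insert_eq, Finset.insert_erase hv]
  have h2 := qb_union G {v} (W.erase v) hd
  rw [e] at h2
  have h3 : qb G {v} {v} = 0 := by simp [qb, qw]
  have h4 : qb G {v} (W.erase v) = 2 * ((W.filter (G.Adj v)).card : ℤ) - (W.card - 1) := by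
    have a1 : ∀ y ∈ W.erase v, qw G v y = 2 * (if G.Adj v y then 1 else 0) - 1 := by
      intro y hy
      have : v ≠ y := (Finset.ne_of_mem_erase hy).symm
      unfold qw
      rw [if_neg this]
      split_ifs <;> norm_num
    unfold qb
    rw [Finset.sum_singleton, Finset.sum_congr rfl a1, Finset.sum_sub_distrib, ← Finset.mul_sum,
      Finset.sum_boole]
    have a2 : (W.erase v).filter (G.Adj v) = W.filter (G.Adj v) := by
      ext u
      simp only [Finset.mem_filter, Finset.mem_erase]
      constructor
      · rintro ⟨⟨_, a⟩, b⟩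
        exact ⟨a, b⟩
      · rintro ⟨a, b⟩
        exact ⟨⟨b.ne', a⟩, b⟩
    rw [a2, Finset.sum_const, Finset.card_erase_of_mem hv]
    have := Finset.card_pos.2 ⟨v, hv⟩
    simp
    omega
  omega

theorem decay_aux (G : SimpleGraph V) (X U : ℕ → Finset V) (hXU : ∀ i, X i ⊆ U i)
    (hmax : ∀ i, ∀ Y ⊆ U i, |qb G Y Y| ≤ |qb G (X i) (X i)|)
    (hU : ∀ i, U (i+1) = U i \ X i) :
    (∀ i j, i ≤ j → |qb G (X j) (X j)| ≤ |qb G (X i) (X i)|) ∧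
    ∀ a, 3 * |qb G (X (a+6)) (X (a+6))| ≤ 2 * |qb G (X a) (X a)| := by
  have hanti : Antitone U := antitone_nat_of_succ_le (fun i => by
    rw [hU]; exact Finset.sdiff_subset)
  have hsub : ∀ i j, i ≤ j → X j ⊆ U i := fun i j hij => (hXU j).trans (hanti hij)
  have hdis : ∀ i j, i < j → Disjoint (X i) (X j) := by
    intro i j hij
    have := hsub (i+1) j hij
    rw [hU] at this
    exact (Finset.disjoint_of_subset_left this Finset.sdiff_disjoint).symm
  have hmono : ∀ i j, i ≤ j → |qb G (X j) (X j)| ≤ |qb G (X i) (X i)| :=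
    fun i j hij => hmax i _ (hsub i j hij)
  refine ⟨hmono, fun a => ?_⟩
  obtain ⟨i, j, l, m, hij, hjl, hlm, e1, e2, e3⟩ :=
    pigeon (fun i => decide (0 ≤ qb G (X (a + i)) (X (a + i))))
  have hij' : a + (i:ℕ) < a + j := by simpa using hij
  have hjl' : a + (j:ℕ) < a + l := by simpa using hjl
  have hlm' : a + (l:ℕ) < a + m := by simpa using hlm
  have b1 := hmono a (a+i) (by omega)
  have b2 := hmono (a+m) (a+6) (by omega)
  suffices 3 * |qb G (X (a+m)) (X (a+m))| ≤ 2 * |qb G (X (a+i)) (X (a+i))| by linarith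
  simp only [decide_eq_decide] at e1 e2 e3
  generalize a + (i:ℕ) = i' at *
  generalize a + (j:ℕ) = j' at *
  generalize a + (l:ℕ) = l' at *
  generalize a + (m:ℕ) = m' at *
  have s1 : X i' ∪ (X j' ∪ (X l' ∪ X m')) ⊆ U i' :=
    Finset.union_subset (hsub _ _ le_rfl) (Finset.union_subset (hsub _ _ (by omega))
      (Finset.union_subset (hsub _ _ (by omega)) (hsub _ _ (by omega))))
  have s2 : (X j' ∪ (X l' ∪ X m')) ⊆ U j' :=
    (Finset.union_subset (hsub _ _ (by omega))
      (Finset.union_subset (hsub _ _ (by omega)) (hsub _ _ (by omega))))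
  have s3 : ((X l' ∪ X m')) ⊆ U l' :=
      (Finset.union_subset (hsub _ _ (by omega)) (hsub _ _ (by omega)))
  by_cases hs : 0 ≤ qb G (X i') (X i')
  · exact four_sets G _ _ _ _ (hdis _ _ (by omega)) (hdis _ _ (by omega)) (hdis _ _ (by omega))
      (hdis _ _ (by omega)) (hdis _ _ (by omega)) (hdis _ _ (by omega))
      ⟨hs, by tauto, by tauto, by tauto⟩
      (fun Y hY => hmax _ _ (hY.trans s1)) (fun Y hY => hmax _ _ (hY.trans s2))
      (fun Y hY => hmax _ _ (hY.trans s3))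
  · have hj : ¬ 0 ≤ qb G (X j') (X j') := by tauto
    have hl : ¬ 0 ≤ qb G (X l') (X l') := by tauto
    have hm : ¬ 0 ≤ qb G (X m') (X m') := by tauto
    have := four_sets Gᶜ (X i') (X j') (X l') (X m')
      (hdis _ _ (by omega)) (hdis _ _ (by omega)) (hdis _ _ (by omega))
      (hdis _ _ (by omega)) (hdis _ _ (by omega)) (hdis _ _ (by omega))
      (by simp only [qb_compl]; omega)
      (fun Y hY => by simpa only [qb_compl, abs_neg] using hmax _ _ (hY.trans s1))
      (fun Y hY => by simpa only [qb_compl, abs_neg] using hmax _ _ (hY.trans s2))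
      (fun Y hY => by simpa only [qb_compl, abs_neg] using hmax _ _ (hY.trans s3))
    simpa only [qb_compl, abs_neg] using this

theorem qb_le (G : SimpleGraph V) (X : Finset V) : |qb G X X| ≤ (X.card : ℤ)^2 := by
  have h1 : ∀ x y, |qw G x y| ≤ 1 := by
    intro x y
    unfold qw
    split_ifs <;> simp
  unfold qb
  calc _ ≤ ∑ x ∈ X, ∑ y ∈ X, |qw G x y| :=
        (Finset.abs_sum_le_sum_abs _ _).trans
          (Finset.sum_le_sum fun _ _ => Finset.abs_sum_le_sum_abs _ _)
    _ ≤ ∑ x ∈ X, ∑ y ∈ X, (1:ℤ) := Finset.sum_le_sum fun _ _ => Finset.sum_le_sum fun _ _ => h1 _ _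
    _ = _ := by simp [sq]

theorem qb_pair (G : SimpleGraph V) (x y : V) (h : x ≠ y) : 1 ≤ |qb G {x, y} {x, y}| := by
  unfold qb
  rw [Finset.sum_pair h, Finset.sum_pair h, Finset.sum_pair h]
  by_cases h' : G.Adj x y <;> simp [qw, h, h.symm, h', G.adj_comm y x]

theorem exists_big [Fintype V] (G : SimpleGraph V) (k n : ℕ) (hn : 2 ^ n * k ^ 2 < 3 ^ n)
    (hN : 6 * n * k + 2 ≤ Fintype.card V) :
    ∃ W : Finset V, k ≤ W.card ∧ ∀ Y ⊆ W, |qb G Y Y| ≤ |qb G W W| := by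
  by_contra! hcon
  have hex : ∀ U : Finset V, ∃ X ⊆ U, ∀ Y ⊆ U, |qb G Y Y| ≤ |qb G X X| := by
    intro U
    obtain ⟨X, hX, h⟩ := Finset.exists_max_image U.powerset (fun Y => |qb G Y Y|)
      ⟨∅, by simp⟩
    exact ⟨X, Finset.mem_powerset.1 hX, fun Y hY => h Y (Finset.mem_powerset.2 hY)⟩
  choose c hc1 hc2 using hex
  have hsmall : ∀ U, (c U).card < k := by
    intro U
    by_contra! h
    obtain ⟨Y, hY, hlt⟩ := hcon (c U) h
    exact absurd (hc2 U Y (hY.trans (hc1 U))) (not_le.2 hlt)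
  let U : ℕ → Finset V := fun i => (fun U => U \ c U)^[i] Finset.univ
  have hU : ∀ i, U (i+1) = U i \ c (U i) := fun i => Function.iterate_succ_apply' _ _ _
  obtain ⟨_, hdec⟩ := decay_aux G (fun i => c (U i)) U (fun i => hc1 _) (fun i => hc2 _) hU
  have hcard : ∀ i, Fintype.card V ≤ (U i).card + i * k := by
    intro i
    induction i with
    | zero => simp [U]
    | succ i ih =>
      rw [hU, Finset.card_sdiff_of_subset (hc1 _), add_mul]
      have := hsmall (U i)
      omega
  have hit : ∀ j : ℕ, 3 ^ j * |qb G (c (U (6*j))) (c (U (6*j)))| ≤ 2 ^ j * (k:ℤ)^2 := by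
    intro j
    induction j with
    | zero =>
      have := qb_le G (c (U 0))
      have h2 : ((c (U 0)).card : ℤ) ≤ k := by exact_mod_cast (hsmall _).le
      simp only [pow_zero, one_mul, mul_zero]
      refine this.trans ?_
      gcongr
    | succ j ih =>
      have := hdec (6*j)
      rw [show 6 * (j+1) = 6*j+6 by ring, pow_succ, pow_succ]
      have p : (0:ℤ) < 3^j := by positivity
      nlinarith [mul_le_mul_of_nonneg_left this p.le]
  have h1 := hit n
  have h2 := hcard (6*n)
  have h3 : 1 < (U (6*n)).card := by omega
  obtain ⟨x, hx, y, hy, hxy⟩ := Finset.one_lt_card.1 h3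
  have h4 := hc2 (U (6*n)) {x, y} (by
    intro z hz
    simp only [Finset.mem_insert, Finset.mem_singleton] at hz
    rcases hz with rfl | rfl <;> assumption)
  have h5 := qb_pair G x y hxy
  have h6 : (2:ℤ)^n * (k:ℤ)^2 < 3^n := by exact_mod_cast hn
  have p : (0:ℤ) < 3^n := by positivity
  nlinarith

end disc

theorem pick_n (k N : ℕ) (hk : 3 ≤ k) (h : 100 * (k : ℝ) * Real.log (k : ℝ) ≤ (N : ℝ)) :
    ∃ n : ℕ, 2 ^ n * k ^ 2 < 3 ^ n ∧ 6 * n * k + 2 ≤ N := by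
  have hk' : (3:ℝ) ≤ k := by exact_mod_cast hk
  have hl : 1 ≤ Real.log k := by
    rw [Real.le_log_iff_exp_le (by linarith)]
    linarith [Real.exp_one_lt_d9]
  refine ⟨⌈6 * Real.log k⌉₊ + 1, ?_, ?_⟩
  · set n := ⌈6 * Real.log k⌉₊ + 1 with hn
    have h1 : 6 * Real.log k < n := by
      have := Nat.le_ceil (6 * Real.log k)
      rw [hn]; push_cast; linarith
    have h2 : (1:ℝ)/3 ≤ Real.log (3/2) := by
      have := Real.one_sub_inv_le_log_of_pos (x := 3/2) (by norm_num)
      norm_num at this ⊢; linarith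
    have h3 : Real.log ((k:ℝ)^2) < Real.log ((3/2:ℝ)^n) := by
      rw [Real.log_pow, Real.log_pow]
      push_cast
      nlinarith
    have h4 := (Real.log_lt_log_iff (by positivity) (by positivity)).1 h3
    rw [div_pow, lt_div_iff₀ (by positivity)] at h4
    have : (2:ℝ)^n * (k:ℝ)^2 < 3^n := by linarith
    exact_mod_cast this
  · have h1 := Nat.ceil_lt_add_one (show 0 ≤ 6 * Real.log k by linarith)
    have : (6:ℝ) * ((⌈6 * Real.log k⌉₊ : ℝ) + 1) * k + 2 ≤ N := by
      have : (6:ℝ) * ((⌈6 * Real.log k⌉₊ : ℝ) + 1) * k ≤ 6 * (6 * Real.log k + 2) * k := by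
        apply mul_le_mul_of_nonneg_right _ (by linarith)
        linarith
      nlinarith
    exact_mod_cast this

theorem fixed_quasi_ramsey_klogk :
    ∃ C : ℝ, 0 < C ∧ ∀ᶠ k : ℕ in Filter.atTop, ∀ N : ℕ,
      C * (k : ℝ) * Real.log (k : ℝ) ≤ (N : ℝ) →
      ∀ G : SimpleGraph (Fin N), ∃ S : Finset (Fin N), S.card = k ∧
        ((∀ v ∈ S,
            ((k : ℝ) - 1) / 2 - 2 * Real.sqrt (((k : ℝ) - 1) * Real.log (k : ℝ)) ≤
              ((S.filter (G.Adj v)).card : ℝ)) ∨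
         (∀ v ∈ S,
            ((k : ℝ) - 1) / 2 - 2 * Real.sqrt (((k : ℝ) - 1) * Real.log (k : ℝ)) ≤
              ((S.filter (Gᶜ.Adj v)).card : ℝ))) := by
  refine ⟨100, by norm_num, ?_⟩
  filter_upwards [Filter.eventually_ge_atTop 3] with k hk N hN G
  obtain ⟨n, hn1, hn2⟩ := pick_n k N hk hN
  obtain ⟨W, hW, hmax⟩ := exists_big G k n hn1 (by simpa using hn2)
  rcases le_total 0 (qb G W W) with h0 | h0
  · obtain ⟨S, hS, h⟩ := thin_graph G W k (by omega) hW (min_deg G W h0 hmax)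
    exact ⟨S, hS, Or.inl h⟩
  · obtain ⟨S, hS, h⟩ := thin_graph Gᶜ W k (by omega) hW (min_deg Gᶜ W
      (by rw [qb_compl]; omega) (fun Y hY => by simpa only [qb_compl, abs_neg] using hmax Y hY))
    exact ⟨S, hS, Or.inr (fun v hv => by convert h v hv)⟩
end
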